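/- arXiv:1806.08590 — 2 statements merged into one kernel-verified Lean document; each statement's English description precedes it below -/
import Mathlib

section
/- Let F₂ be the free group of rank two, let C be the set of conjugacy classes of F₂, and let G = Out(F₂) = Aut(F₂)/F₂ act naturally on C (via the action of Aut(F₂) on F₂). Then there exists a conjugacy class c ∈ C such that c is disjoint from the subgroup of F₂ generated by the union of the conjugacy classes g·c for g ∈ G \ {e}; that is, c ∩ ⟨ g·c : g ∈ G \ {e} ⟩_{F₂} = ∅. -/
open MeasureTheory

namespace IRSPaper


/-! ## Basic setup: the space of subgroups, invariant random subgroups -/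

/-- The conjugation action of a group on its space of subgroups: `g • H = gHg⁻¹`. -/
def conjSub {G : Type*} [Group G] (g : G) (H : Subgroup G) : Subgroup G :=
  Subgroup.map ((MulAut.conj g).toMonoidHom) H

/-- The topology on the space of subgroups of `G`, induced from the product topology
on `G → Bool` (i.e. the topology of `2^G`). -/
noncomputable instance instTopSub (G : Type*) [Group G] : TopologicalSpace (Subgroup G) :=
  TopologicalSpace.induced
    (fun (H : Subgroup G) (g : G) => @decide (g ∈ H) (Classical.dec _)) inferInstance

/-- The Borel σ-algebra on the space of subgroups. -/
noncomputable instance instMeasSub (G : Type*) [Group G] : MeasurableSpace (Subgroup G) :=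
  borel _

instance instBorelSub (G : Type*) [Group G] : BorelSpace (Subgroup G) := ⟨rfl⟩

/-- An invariant random subgroup: a Borel probability measure on `Sub(G)` which is invariant
under the conjugation action of `G`. -/
def IsIRS {G : Type*} [Group G] (θ : Measure (Subgroup G)) : Prop :=
  IsProbabilityMeasure θ ∧ ∀ g : G, Measure.map (conjSub g) θ = θ

/-- The basic set `N_F = {H ∈ Sub(G) : F ⊆ H}`. -/
def NSet {G : Type*} [Group G] (F : Set G) : Set (Subgroup G) :=
  {H : Subgroup G | F ⊆ (H : Set G)}

/-- For `Γ ≤ Δ` and `S ⊆ Δ`, the set of subgroups of `Γ` containing every element of `Γ`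
whose image in `Δ` lies in `S`.  When `S = t⁻¹Ft ⊆ Γ`, this is exactly the basic set
`N_{t⁻¹Ft}^Γ ⊆ Sub(Γ)`. -/
def NpullSet {Δ : Type*} [Group Δ] (Γ : Subgroup Δ) (S : Set Δ) : Set (Subgroup ↥Γ) :=
  {Λ : Subgroup ↥Γ | ∀ x : ↥Γ, (x : Δ) ∈ S → x ∈ Λ}

/-- `T` is a transversal for the left cosets `Δ/Γ`: each left coset `dΓ` contains exactly
one element of `T`. -/
def IsLeftTransversal {Δ : Type*} [Group Δ] (Γ : Subgroup Δ) (T : Set Δ) : Prop :=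
  ∀ d : Δ, ∃! t : Δ, t ∈ T ∧ d⁻¹ * t ∈ Γ

/-- The defining property of the co-induced invariant random subgroup
`ν = CIND_Γ^Δ(θ)` (with respect to the transversal `T`):  for every finite `F ⊆ Δ`,
`ν(N_F) = 0` if `F ⊄ core_Δ(Γ)` and `ν(N_F) = ∏_{t ∈ T} θ(N_{t⁻¹Ft}^Γ)` if `F ⊆ core_Δ(Γ)`. -/
def CindSpec {Δ : Type*} [Group Δ] (Γ : Subgroup Δ) (T : Set Δ)
    (θ : Measure (Subgroup ↥Γ)) (ν : Measure (Subgroup Δ)) : Prop :=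
  ∀ F : Finset Δ,
    (¬ (F : Set Δ) ⊆ (Γ.normalCore : Set Δ) → ν (NSet (F : Set Δ)) = 0) ∧
    ((F : Set Δ) ⊆ (Γ.normalCore : Set Δ) →
      ν (NSet (F : Set Δ)) =
        ∏' t : T, θ (NpullSet Γ ((fun d => (t : Δ)⁻¹ * d * (t : Δ)) '' (F : Set Δ))))

/-- Ergodicity of a (not necessarily probability-) measure-preserving action given by
an explicit family of maps: every invariant measurable set is null or conull. -/
def ErgodicAct {G α : Type*} [MeasurableSpace α] (act : G → α → α) (μ : Measure α) : Prop :=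
  ∀ s : Set α, MeasurableSet s → (∀ g : G, act g ⁻¹' s = s) → μ s = 0 ∨ μ sᶜ = 0

/-- Weak mixing of an action: the diagonal action on the square is ergodic. -/
def WeaklyMixingAct {G α : Type*} [MeasurableSpace α] (act : G → α → α) (μ : Measure α) : Prop :=
  ErgodicAct (fun (g : G) (p : α × α) => (act g p.1, act g p.2)) (μ.prod μ)

/-- A measure is non-atomic (has no atoms) if every singleton is null. -/
def NonAtomicMeasure {α : Type*} [MeasurableSpace α] (μ : Measure α) : Prop :=
  ∀ x : α, μ {x} = 0

/-- The kernel of an IRS `θ` of `Γ`: the set of `γ ∈ Γ` with `θ(N_γ) = 1`.  (For a probability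
measure this set is a subgroup; taking `Subgroup.closure` makes it a `Subgroup` on the nose.) -/
def kerIRS {Δ : Type*} [Group Δ] (Γ : Subgroup Δ) (θ : Measure (Subgroup ↥Γ)) : Subgroup ↥Γ :=
  Subgroup.closure {x : ↥Γ | θ {Λ : Subgroup ↥Γ | x ∈ Λ} = 1}

/-- `core_Δ(ker(θ))`, viewed as a subgroup of `Δ`. -/
def coreKer {Δ : Type*} [Group Δ] (Γ : Subgroup Δ) (θ : Measure (Subgroup ↥Γ)) : Subgroup Δ :=
  ((kerIRS Γ θ).map Γ.subtype).normalCore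

/-! ## The free group `F₂`, small cancellation notions -/

/-- The free group on two generators. -/
abbrev F2 : Type := FreeGroup Bool

/-- The first generator `a` of `F₂`. -/
def genA : F2 := FreeGroup.of true

/-- The second generator `b` of `F₂`. -/
def genB : F2 := FreeGroup.of false

/-- The length `|x|` of the reduced word representing `x`. -/
def flen (x : F2) : ℕ := x.toWord.length

/-- `x` is cyclically reduced iff it has minimal length in its conjugacy class. -/
def CyclRed (x : F2) : Prop := ∀ g : F2, flen x ≤ flen (g * x * g⁻¹)

/-- The length `‖x‖` of the cyclically reduced word conjugate to `x`. -/
noncomputable def cyclen (x : F2) : ℕ := sInf (Set.range fun g : F2 => flen (g * x * g⁻¹))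

/-- `u` is an initial segment (prefix) of the reduced word of `x`. -/
def IsInitSeg (u x : F2) : Prop := ∃ v : F2, x = u * v ∧ flen x = flen u + flen v

/-- `S̃`: the set of all cyclically reduced cyclic conjugates of the words in `S` and of their
inverses.  (The cyclically reduced cyclic conjugates of a word `s` are exactly the cyclically
reduced elements of the conjugacy class of `s`.) -/
def tildeSet (S : Set F2) : Set F2 :=
  {y : F2 | CyclRed y ∧ ∃ s ∈ S, IsConj s y ∨ IsConj s⁻¹ y}

/-- The `C'(1/6)` small cancellation property for a set of words `S ⊆ F₂`. -/
def C'sixth (S : Set F2) : Prop :=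
  ∀ x ∈ tildeSet S, ∀ y ∈ tildeSet S, x ≠ y →
    ∀ u : F2, IsInitSeg u x → IsInitSeg u y → 6 * flen u < min (flen x) (flen y)

/-- The word `w = a b a² b² ⋯ aⁿ bⁿ`. -/
def wordW (n : ℕ) : F2 :=
  ((List.range n).map (fun i => genA ^ (i + 1) * genB ^ (i + 1))).prod

/-- The group of inner automorphisms of `F₂`, as a subgroup of `Aut(F₂)`;
this is the image of `F₂` in `Aut(F₂)`, identified with `F₂` itself. -/
def innerF2 : Subgroup (MulAut F2) := (MulAut.conj : F2 →* MulAut F2).range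

/-! ## Part A: the length function on `F₂` -/

/-- Length of the longest common prefix of two words. -/
def cpl : List (Bool × Bool) → List (Bool × Bool) → ℕ
  | x :: xs, y :: ys => if x = y then cpl xs ys + 1 else 0
  | [], _ => 0
  | _ :: _, [] => 0

lemma cpl_hyp : ∀ x y z : List (Bool × Bool), min (cpl x y) (cpl y z) ≤ cpl x z
  | [], y, z => by simp [cpl]
  | x :: xs, [], z => by simp [cpl]
  | x :: xs, y :: ys, [] => by simp [cpl]
  | x :: xs, y :: ys, z :: zs => by
      have := cpl_hyp xs ys zs
      simp only [cpl]
      split_ifs <;> first | omega | simp_all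

lemma norm_mk_of_isReduced {L : List (Bool × Bool)} (h : FreeGroup.IsReduced L) :
    (FreeGroup.mk L).norm = L.length := by
  rw [FreeGroup.norm, FreeGroup.toWord_mk, h.reduce_eq]

lemma isReduced_invRev {L : List (Bool × Bool)} (h : FreeGroup.IsReduced L) :
    FreeGroup.IsReduced (FreeGroup.invRev L) := by
  apply FreeGroup.IsReduced.of_reduce_eq
  rw [FreeGroup.reduce_invRev, h.reduce_eq]

lemma norm_inv_mul_mk : ∀ {L₁ L₂ : List (Bool × Bool)}, FreeGroup.IsReduced L₁ →
    FreeGroup.IsReduced L₂ →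
    ((FreeGroup.mk L₁)⁻¹ * FreeGroup.mk L₂).norm + 2 * cpl L₁ L₂ = L₁.length + L₂.length
  | [], L₂, _, h₂ => by
      have : (FreeGroup.mk ([] : List (Bool × Bool))) = 1 := rfl
      simp [cpl, this, norm_mk_of_isReduced h₂]
  | x :: xs, [], h₁, _ => by
      have : (FreeGroup.mk ([] : List (Bool × Bool))) = 1 := rfl
      rw [this, mul_one, FreeGroup.norm_inv_eq, norm_mk_of_isReduced h₁]
      simp [cpl]
  | x :: xs, y :: ys, h₁, h₂ => by
      by_cases hxy : x = y
      · subst hxy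
        have ih := norm_inv_mul_mk (h₁.infix (List.suffix_cons x xs).isInfix)
          (h₂.infix (List.suffix_cons x ys).isInfix)
        have e : ∀ l, FreeGroup.mk (x :: l) = FreeGroup.mk [x] * FreeGroup.mk l := by
          intro l; rw [FreeGroup.mul_mk]; rfl
        rw [e xs, e ys, mul_inv_rev, mul_assoc, inv_mul_cancel_left]
        simp only [cpl, if_true, List.length_cons]
        omega
      · have hr : FreeGroup.IsReduced (FreeGroup.invRev (x :: xs) ++ (y :: ys)) := by
          refine List.isChain_append.2 ⟨isReduced_invRev h₁, h₂, ?_⟩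
          intro u hu v hv
          simp [FreeGroup.invRev] at hu hv
          subst hu; subst hv
          intro h
          by_contra hne
          apply hxy
          ext
          · simpa using h
          · cases hx : x.2 <;> cases hy : y.2 <;> simp_all
        rw [FreeGroup.inv_mk, FreeGroup.mul_mk, norm_mk_of_isReduced hr]
        simp [cpl, hxy]

/-- Common prefix length of two elements of the free group. -/
def cp (x y : F2) : ℕ := cpl x.toWord y.toWord

lemma cp_eq (x y : F2) : (x⁻¹ * y).norm + 2 * cp x y = x.norm + y.norm := by
  have := norm_inv_mul_mk (FreeGroup.isReduced_toWord (x := x)) (FreeGroup.isReduced_toWord (x := y))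
  rwa [FreeGroup.mk_toWord, FreeGroup.mk_toWord] at this

lemma cp_hyp (x y z : F2) : min (cp x y) (cp y z) ≤ cp x z := cpl_hyp _ _ _

lemma cp_comm (x y : F2) : cp x y = cp y x := by
  have h1 := cp_eq x y
  have h2 := cp_eq y x
  have : (x⁻¹ * y).norm = (y⁻¹ * x).norm := by
    rw [← FreeGroup.norm_inv_eq]; simp
  omega

lemma norm_mul_self_gt {x : F2} (hx : x ≠ 1) : x.norm < (x * x).norm := by
  have h1 := FreeGroup.reduceCyclically.reduce_flatten_replicate_succ
    (FreeGroup.isReduced_toWord (x := x)) 1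
  have h2 := FreeGroup.reduceCyclically.conj_conjugator_reduceCyclically x.toWord
  have h3 : (x * x).norm = (FreeGroup.reduce (List.replicate (1+1) x.toWord).flatten).length := by
    rw [FreeGroup.norm, FreeGroup.toWord_mul]; simp [List.replicate]
  have h4 : FreeGroup.reduceCyclically x.toWord ≠ [] := by
    intro h
    rw [h] at h2
    apply hx
    have : FreeGroup.mk x.toWord = 1 := by
      rw [← h2, List.append_nil, ← FreeGroup.mul_mk, ← FreeGroup.inv_mk, mul_inv_cancel]
    rwa [FreeGroup.mk_toWord] at this
  have h5 : 0 < (FreeGroup.reduceCyclically x.toWord).length := List.length_pos_iff.2 h4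
  rw [h3, h1, FreeGroup.norm, ← congrArg List.length h2]
  simp [List.replicate]
  omega

lemma exists_prefix (y : F2) (m : ℕ) (hm : m ≤ y.norm) :
    ∃ p : F2, p.norm = m ∧ (p⁻¹ * y).norm + m = y.norm := by
  have hr := FreeGroup.isReduced_toWord (x := y)
  have h1 : FreeGroup.IsReduced (y.toWord.take m) := hr.infix (List.take_prefix _ _).isInfix
  have h2 : FreeGroup.IsReduced (y.toWord.drop m) := hr.infix (List.drop_suffix _ _).isInfix
  have e : y = FreeGroup.mk (y.toWord.take m) * FreeGroup.mk (y.toWord.drop m) := by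
    rw [FreeGroup.mul_mk, List.take_append_drop, FreeGroup.mk_toWord]
  have hm' : m ≤ y.toWord.length := hm
  refine ⟨FreeGroup.mk (y.toWord.take m), ?_, ?_⟩
  · rw [norm_mk_of_isReduced h1]; simp [hm']
  · have e' : (FreeGroup.mk (y.toWord.take m))⁻¹ * y = FreeGroup.mk (y.toWord.drop m) := by
      rw [inv_mul_eq_iff_eq_mul]; exact e
    rw [e', norm_mk_of_isReduced h2, FreeGroup.norm]; simp; omega

/-! ## Part B: Nielsen reduction for generating pairs -/

/-- A family of pairs which are of minimal total length in a Nielsen class. -/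
structure MinFam (M : F2 → F2 → Prop) : Prop where
  rot : ∀ {u v}, M u v → M v u⁻¹
  inv : ∀ {u v}, M u v → M u⁻¹ v
  ne : ∀ {u v}, M u v → u ≠ 1
  shear : ∀ {u v}, M u v → ∀ g : F2,
    u.norm + v.norm ≤ (g * v * g⁻¹).norm + (g * (v * u) * g⁻¹).norm

namespace MinFam

variable {M : F2 → F2 → Prop} (hM : MinFam M) {u v : F2}

lemma swap (hM : MinFam M) (h : M u v) : M v u := by
  simpa using hM.rot (hM.inv h)

lemma inv' (hM : MinFam M) (h : M u v) : M u v⁻¹ := hM.swap (hM.inv (hM.swap h))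

lemma le1 (hM : MinFam M) (h : M u v) : u.norm ≤ (v * u).norm := by
  have := hM.shear h 1
  simp at this
  omega

lemma le2 (hM : MinFam M) (h : M u v) : v.norm ≤ (v * u).norm := by
  have := hM.le1 (hM.swap (hM.inv (hM.inv' h)))
  rw [← mul_inv_rev, FreeGroup.norm_inv_eq, FreeGroup.norm_inv_eq] at this
  exact this

lemma bnd (hM : MinFam M) (h : M u v) : 2 * cp v⁻¹ u ≤ u.norm ∧ 2 * cp v⁻¹ u ≤ v.norm := by
  have h1 := hM.le1 h
  have h2 := hM.le2 h
  have h3 := cp_eq v⁻¹ u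
  rw [inv_inv, FreeGroup.norm_inv_eq] at h3
  omega

lemma self (hM : MinFam M) (h : M u v) : 2 * cp u⁻¹ u < u.norm := by
  have h1 := norm_mul_self_gt (hM.ne h)
  have h3 := cp_eq u⁻¹ u
  rw [inv_inv, FreeGroup.norm_inv_eq] at h3
  omega

lemma crit_same (hM : MinFam M) (h : M u v) (h1 : 2 * cp v⁻¹ u = u.norm)
    (h2 : 2 * cp u⁻¹ v = u.norm) : False := by
  obtain ⟨m, hm⟩ : ∃ m, m = cp v⁻¹ u := ⟨_, rfl⟩
  obtain ⟨p, hp, hp'⟩ := exists_prefix u m (by omega)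
  have hu : u.norm ≠ 0 := by
    rw [Ne, FreeGroup.norm_eq_zero]; exact hM.ne h
  have hb := (hM.bnd h).2
  -- `p` is a prefix of `u` and of `v⁻¹`
  have c1 := cp_eq p u
  have c2 := cp_hyp v⁻¹ u p
  rw [cp_comm u p] at c2
  have c3 := cp_eq v⁻¹ p
  rw [inv_inv, FreeGroup.norm_inv_eq] at c3
  -- `q` is a prefix of `u⁻¹` and of `v`
  have c4 := cp_eq (u⁻¹ * p) u⁻¹
  have e4 : (u⁻¹ * p)⁻¹ * u⁻¹ = p⁻¹ := by group
  have e5 : (u⁻¹ * p).norm = (p⁻¹ * u).norm := by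
    rw [← FreeGroup.norm_inv_eq]; congr 1; group
  rw [e4, FreeGroup.norm_inv_eq, FreeGroup.norm_inv_eq, e5] at c4
  have c5 := cp_hyp (u⁻¹ * p) u⁻¹ v
  have c6 := cp_eq v (v * p)
  rw [inv_mul_cancel_left] at c6
  have c7 := cp_hyp (u⁻¹ * p) v (v * p)
  have c8 := cp_eq (u⁻¹ * p) (v * p)
  rw [e5] at c8
  have hs := hM.shear (hM.swap h) p⁻¹
  have e6 : p⁻¹ * (u * v) * p⁻¹⁻¹ = (u⁻¹ * p)⁻¹ * (v * p) := by group
  have e7 := FreeGroup.norm_mul_le (p⁻¹ * u) p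
  rw [e6, inv_inv] at hs
  have e8 := FreeGroup.norm_mul_le v p
  have e9 := FreeGroup.norm_mul_le (v * p) p⁻¹
  rw [mul_inv_cancel_right, FreeGroup.norm_inv_eq] at e9
  omega

lemma crit_opp (hM : MinFam M) (h : M u v) (h1 : 2 * cp v⁻¹ u = u.norm)
    (h2 : 2 * cp u⁻¹ v⁻¹ = u.norm) : False := by
  have := hM.self h
  have := cp_hyp u⁻¹ v⁻¹ u
  omega

lemma reduced (hM : MinFam M) (h : M u v) {x z : F2} (hx : x = u ∨ x = v ∨ x = v⁻¹)
    (hz : z = u ∨ z = v ∨ z = v⁻¹) : cp x⁻¹ u + cp u⁻¹ z < u.norm := by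
  have h' := hM.inv' h
  have s := hM.self h
  have b1 := (hM.bnd h).1
  have b2 := (hM.bnd h').1
  have b3 := (hM.bnd (hM.inv h)).1
  have b4 := (hM.bnd (hM.inv h')).1
  have k1 := not_and.2 (hM.crit_same h)
  have k2 := not_and.2 (hM.crit_same h')
  have k3 := not_and.2 (hM.crit_opp h)
  have k4 := not_and.2 (hM.crit_opp h')
  have e1 := cp_comm v⁻¹ u⁻¹
  have e2 := cp_comm v u⁻¹
  rw [FreeGroup.norm_inv_eq] at b3 b4
  rw [inv_inv] at b2 b4 k2 k4
  rcases hx with rfl | rfl | rfl <;> rcases hz with rfl | rfl | rfl <;>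
    (try rw [inv_inv]) <;> omega

end MinFam

/-- Value of a signed letter under a map. -/
def sval (f : Bool → F2) (l : Bool × Bool) : F2 := cond l.2 (f l.1) (f l.1)⁻¹

lemma lift_mk_cons (f : Bool → F2) (l : Bool × Bool) (L : List (Bool × Bool)) :
    FreeGroup.lift f (FreeGroup.mk (l :: L)) = sval f l * FreeGroup.lift f (FreeGroup.mk L) := by
  simp [FreeGroup.lift_mk, sval]

lemma word_length (f : Bool → F2)
    (N : ∀ x y z : Bool × Bool, (x.1 = y.1 → x.2 = y.2) → (y.1 = z.1 → y.2 = z.2) →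
      cp (sval f x)⁻¹ (sval f y) + cp (sval f y)⁻¹ (sval f z) < (sval f y).norm) :
    ∀ (L : List (Bool × Bool)) (y : Bool × Bool), FreeGroup.IsReduced (y :: L) →
      ∀ x : Bool × Bool, (x.1 = y.1 → x.2 = y.2) →
      cp (sval f x)⁻¹ (sval f y) < cp (sval f y) (FreeGroup.lift f (FreeGroup.mk (y :: L))) ∧
      L.length + 1 + cp (sval f x)⁻¹ (sval f y) ≤ (FreeGroup.lift f (FreeGroup.mk (y :: L))).norm
  | [], y, _, x, hx => by
      have e : FreeGroup.lift f (FreeGroup.mk [y]) = sval f y := by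
        simp [FreeGroup.lift_mk, sval]
      rw [e]
      have h := N x y y hx (fun _ => rfl)
      have h2 := cp_eq (sval f y) (sval f y)
      simp at h2 ⊢
      omega
  | y' :: L, y, hL, x, hx => by
      obtain ⟨hyy, hL'⟩ := FreeGroup.isReduced_cons_cons.1 hL
      obtain ⟨i1, i2⟩ := word_length f N L y' hL' y hyy
      rw [lift_mk_cons f y]
      set P := FreeGroup.lift f (FreeGroup.mk (y' :: L)) with hP
      have h := N x y y' hx hyy
      have c1 := cp_hyp (sval f y)⁻¹ (sval f y') P
      have c2 := cp_hyp (sval f y)⁻¹ P (sval f y')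
      rw [cp_comm P] at c2
      have c3 := cp_eq (sval f y)⁻¹ P
      rw [inv_inv, FreeGroup.norm_inv_eq] at c3
      have c4 := cp_eq (sval f y) (sval f y * P)
      rw [inv_mul_cancel_left] at c4
      simp only [List.length_cons]
      omega

/-- Build an automorphism of `F₂` from images of generators of it and of its inverse. -/
def mkAut (f g : Bool → F2)
    (h1 : ∀ i, FreeGroup.lift g (f i) = FreeGroup.of i)
    (h2 : ∀ i, FreeGroup.lift f (g i) = FreeGroup.of i) : MulAut F2 :=
  MonoidHom.toMulEquiv (FreeGroup.lift f) (FreeGroup.lift g)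
    (FreeGroup.ext_hom _ _ (by intro i; simpa using h1 i))
    (FreeGroup.ext_hom _ _ (by intro i; simpa using h2 i))

/-- `a ↦ b`, `b ↦ a⁻¹`. -/
def autS : MulAut F2 := mkAut
  (fun i => cond i (FreeGroup.of false) (FreeGroup.of true)⁻¹)
  (fun i => cond i (FreeGroup.of false)⁻¹ (FreeGroup.of true))
  (by intro i; cases i <;> simp) (by intro i; cases i <;> simp)

/-- `a ↦ a b⁻¹`, `b ↦ a`. -/
def autT : MulAut F2 := mkAut
  (fun i => cond i (FreeGroup.of true * (FreeGroup.of false)⁻¹) (FreeGroup.of true))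
  (fun i => cond i (FreeGroup.of false) ((FreeGroup.of true)⁻¹ * FreeGroup.of false))
  (by intro i; cases i <;> simp) (by intro i; cases i <;> simp)

/-- `a ↦ a⁻¹`, `b ↦ b`. -/
def autE : MulAut F2 := mkAut
  (fun i => cond i (FreeGroup.of true)⁻¹ (FreeGroup.of false))
  (fun i => cond i (FreeGroup.of true)⁻¹ (FreeGroup.of false))
  (by intro i; cases i <;> simp) (by intro i; cases i <;> simp)

@[simp] lemma mkAut_of (f g : Bool → F2) (h1 h2) (i : Bool) :
    mkAut f g h1 h2 (FreeGroup.of i) = f i := by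
  show FreeGroup.lift f (FreeGroup.of i) = f i
  simp

@[simp] lemma autS_a : autS genA = genB := mkAut_of _ _ _ _ true
@[simp] lemma autS_b : autS genB = genA⁻¹ := mkAut_of _ _ _ _ false
@[simp] lemma autT_a : autT genA = genA * genB⁻¹ := mkAut_of _ _ _ _ true
@[simp] lemma autT_b : autT genB = genA := mkAut_of _ _ _ _ false
@[simp] lemma autE_a : autE genA = genA⁻¹ := mkAut_of _ _ _ _ true
@[simp] lemma autE_b : autE genB = genB := mkAut_of _ _ _ _ false

lemma aut_ext {φ ψ : MulAut F2} (ha : φ genA = ψ genA) (hb : φ genB = ψ genB) : φ = ψ := by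
  have : φ.toMonoidHom = ψ.toMonoidHom := by
    apply FreeGroup.ext_hom
    intro i
    cases i
    · exact hb
    · exact ha
  ext x
  exact DFunLike.congr_fun this x

lemma aut_lift (φ : MulAut F2) (x : F2) :
    φ x = FreeGroup.lift (fun i => φ (FreeGroup.of i)) x := by
  have : φ.toMonoidHom = FreeGroup.lift (fun i => φ (FreeGroup.of i)) := by
    apply FreeGroup.ext_hom
    intro i
    simp
  exact DFunLike.congr_fun this x

/-- A minimal automorphism in a Nielsen class is a signed permutation of the generators. -/
lemma minimal_letters (φ : MulAut F2) {M : F2 → F2 → Prop} (hM : MinFam M)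
    (h : M (φ genA) (φ genB)) (x : F2) (hx : (φ x).norm = 1) : ∃ i : Bool,
      x = FreeGroup.of i ∨ x = (FreeGroup.of i)⁻¹ := by
  have N : ∀ x y z : Bool × Bool, (x.1 = y.1 → x.2 = y.2) → (y.1 = z.1 → y.2 = z.2) →
      cp (sval (fun i => φ (FreeGroup.of i)) x)⁻¹ (sval (fun i => φ (FreeGroup.of i)) y) +
      cp (sval (fun i => φ (FreeGroup.of i)) y)⁻¹ (sval (fun i => φ (FreeGroup.of i)) z)
        < (sval (fun i => φ (FreeGroup.of i)) y).norm := by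
    have h' : M (φ (FreeGroup.of true)) (φ (FreeGroup.of false)) := h
    rintro ⟨x1, x2⟩ ⟨y1, y2⟩ ⟨z1, z2⟩ hxy hyz
    cases y1 <;> cases y2
    · apply hM.reduced (hM.inv (hM.swap h')) <;>
      cases x1 <;> cases x2 <;> cases z1 <;> cases z2 <;> simp [sval] at hxy hyz ⊢
    · apply hM.reduced (hM.swap h') <;>
      cases x1 <;> cases x2 <;> cases z1 <;> cases z2 <;> simp [sval] at hxy hyz ⊢
    · apply hM.reduced (hM.inv h') <;>
      cases x1 <;> cases x2 <;> cases z1 <;> cases z2 <;> simp [sval] at hxy hyz ⊢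
    · apply hM.reduced h' <;>
      cases x1 <;> cases x2 <;> cases z1 <;> cases z2 <;> simp [sval] at hxy hyz ⊢
  rw [aut_lift] at hx
  have hr := FreeGroup.isReduced_toWord (x := x)
  rw [← FreeGroup.mk_toWord (x := x)] at hx ⊢
  rcases hw : x.toWord with _ | ⟨y, L⟩
  · rw [hw] at hx
    simp at hx
  · rw [hw] at hx hr
    have := (word_length _ N L y hr y (fun _ => rfl)).2
    have hL : L = [] := by
      apply List.length_eq_zero_iff.1
      omega
    subst hL
    refine ⟨y.1, ?_⟩
    obtain ⟨i, s⟩ := y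
    cases s
    · right; rfl
    · left; rfl

lemma genA_ne_genB : genA ≠ genB := by
  intro h; have := FreeGroup.of_injective h; simp at this

/-- **Nielsen**: `Aut(F₂)` is generated by inner automorphisms and `S`, `T`, `E`. -/
theorem nielsen (H : Subgroup (MulAut F2)) (hI : innerF2 ≤ H) (hS : autS ∈ H) (hT : autT ∈ H)
    (hE : autE ∈ H) (φ₀ : MulAut F2) : φ₀ ∈ H := by
  -- minimal total length in the coset `φ₀ H`
  let len : MulAut F2 → ℕ := fun φ => (φ genA).norm + (φ genB).norm
  obtain ⟨n, ⟨τ₀, hτ₀, hn⟩, hmin⟩ :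
      ∃ n, (∃ τ ∈ H, len (φ₀ * τ) = n) ∧ ∀ τ ∈ H, n ≤ len (φ₀ * τ) := by
    classical
    have hex : ∃ n, ∃ τ ∈ H, len (φ₀ * τ) = n := ⟨_, 1, H.one_mem, rfl⟩
    refine ⟨Nat.find hex, Nat.find_spec hex, fun τ hτ => Nat.find_min' hex ⟨τ, hτ, rfl⟩⟩
  let M : F2 → F2 → Prop := fun u v => u.norm + v.norm = n ∧
    ∃ τ ∈ H, (φ₀ * τ) genA = u ∧ (φ₀ * τ) genB = v
  have hM : MinFam M := by
    refine ⟨?_, ?_, ?_, ?_⟩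
    · rintro u v ⟨h1, τ, hτ, rfl, rfl⟩
      refine ⟨by rw [FreeGroup.norm_inv_eq]; omega, τ * autS, H.mul_mem hτ hS, ?_, ?_⟩ <;> simp
    · rintro u v ⟨h1, τ, hτ, rfl, rfl⟩
      refine ⟨by rw [FreeGroup.norm_inv_eq]; omega, τ * autE, H.mul_mem hτ hE, ?_, ?_⟩ <;> simp
    · rintro u v ⟨h1, τ, hτ, rfl, rfl⟩ h
      rw [EmbeddingLike.map_eq_one_iff] at h
      exact FreeGroup.of_ne_one true h
    · rintro u v ⟨h1, τ, hτ, rfl, rfl⟩ g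
      have key := hmin (τ * (autS * autT) * MulAut.conj (((φ₀ * (τ * (autS * autT))).symm) g))
        (H.mul_mem (H.mul_mem hτ (H.mul_mem hS hT)) (hI ⟨_, rfl⟩))
      have e : ∀ x, (φ₀ * (τ * (autS * autT) *
          MulAut.conj (((φ₀ * (τ * (autS * autT))).symm) g))) x
          = g * (φ₀ (τ (autS (autT x)))) * g⁻¹ := by
        intro x
        rw [← mul_assoc, MulAut.mul_apply, MulAut.conj_apply, map_mul, map_mul, map_inv,
          MulEquiv.apply_symm_apply]
        rfl
      simp only [len, e] at key
      simp at key
      rw [h1]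
      simp only [MulAut.mul_apply]
      omega
  have hmem : M ((φ₀ * τ₀) genA) ((φ₀ * τ₀) genB) := ⟨hn, τ₀, hτ₀, rfl, rfl⟩
  obtain ⟨i, hi⟩ := minimal_letters (φ₀ * τ₀) hM hmem ((φ₀ * τ₀).symm genA)
    (by rw [MulEquiv.apply_symm_apply]; exact FreeGroup.norm_of true)
  obtain ⟨j, hj⟩ := minimal_letters (φ₀ * τ₀) hM hmem ((φ₀ * τ₀).symm genB)
    (by rw [MulEquiv.apply_symm_apply]; exact FreeGroup.norm_of false)
  suffices hs : (φ₀ * τ₀)⁻¹ ∈ H by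
    have := H.mul_mem (H.inv_mem hs) (H.inv_mem hτ₀)
    simpa using this
  have key : ∀ ψ : MulAut F2, ψ ∈ H → (φ₀ * τ₀).symm genA = ψ genA →
      (φ₀ * τ₀).symm genB = ψ genB → (φ₀ * τ₀)⁻¹ ∈ H := by
    intro ψ hψ h1 h2
    have : (φ₀ * τ₀)⁻¹ = ψ := aut_ext h1 h2
    rwa [this]
  have iS := H.mul_mem hS hS
  have ES := H.mul_mem hE hS
  have inj : ∀ x y : F2, (φ₀ * τ₀).symm x = y → x = (φ₀ * τ₀) y := by
    rintro x y rfl; simp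
  have hab : ¬ ((φ₀ * τ₀).symm genA = (φ₀ * τ₀).symm genB) := by
    rw [EmbeddingLike.apply_eq_iff_eq]; exact genA_ne_genB
  have hab' : ¬ ((φ₀ * τ₀).symm genA = ((φ₀ * τ₀).symm genB)⁻¹) := by
    rw [← map_inv, EmbeddingLike.apply_eq_iff_eq]
    intro h
    have := congrArg FreeGroup.toWord h
    simp [genA, genB, FreeGroup.invRev] at this
  have hA : FreeGroup.of true = genA := rfl
  have hB : FreeGroup.of false = genB := rfl
  cases i <;> cases j <;> rw [hA, hB] at * <;>
    rcases hi with hi | hi <;> rcases hj with hj | hj <;> rw [hi, hj] at hab hab'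
  all_goals first
    | exact absurd rfl hab
    | exact absurd rfl hab'
    | exact absurd (inv_inv _).symm hab'
    | skip
  all_goals first
    | (refine key 1 H.one_mem ?_ ?_ <;> (simp [hi, hj]; done))
    | (refine key autE hE ?_ ?_ <;> (simp [hi, hj]; done))
    | (refine key autS hS ?_ ?_ <;> (simp [hi, hj]; done))
    | (refine key _ iS ?_ ?_ <;> (simp [hi, hj]; done))
    | (refine key _ ES ?_ ?_ <;> (simp [hi, hj]; done))
    | (refine key _ (H.mul_mem hS hE) ?_ ?_ <;> (simp [hi, hj]; done))
    | (refine key _ (H.mul_mem hS iS) ?_ ?_ <;> (simp [hi, hj]; done))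
    | (refine key _ (H.mul_mem hE iS) ?_ ?_ <;> (simp [hi, hj]; done))

/-! ## Part C: the kernel of `Aut(F₂) → GL₂(ℤ)` is inner -/

/-- Abelianization. -/
def ab : F2 →* Multiplicative (ℤ × ℤ) :=
  FreeGroup.lift (fun i => cond i (Multiplicative.ofAdd (1, 0)) (Multiplicative.ofAdd (0, 1)))

/-- Exponent sum of `a`. -/
def ea (x : F2) : ℤ := (Multiplicative.toAdd (ab x)).1
/-- Exponent sum of `b`. -/
def eb (x : F2) : ℤ := (Multiplicative.toAdd (ab x)).2

@[simp] lemma ab_a : ab genA = Multiplicative.ofAdd (1, 0) := by simp [ab, genA]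
@[simp] lemma ab_b : ab genB = Multiplicative.ofAdd (0, 1) := by simp [ab, genB]
@[simp] lemma ea_one : ea 1 = 0 := by simp [ea]
@[simp] lemma eb_one : eb 1 = 0 := by simp [eb]
@[simp] lemma ea_mul (x y : F2) : ea (x * y) = ea x + ea y := by simp [ea]
@[simp] lemma eb_mul (x y : F2) : eb (x * y) = eb x + eb y := by simp [eb]
@[simp] lemma ea_inv (x : F2) : ea x⁻¹ = - ea x := by simp [ea]
@[simp] lemma eb_inv (x : F2) : eb x⁻¹ = - eb x := by simp [eb]
@[simp] lemma ea_a : ea genA = 1 := by simp [ea]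
@[simp] lemma eb_a : eb genA = 0 := by simp [eb]
@[simp] lemma ea_b : ea genB = 0 := by simp [ea]
@[simp] lemma eb_b : eb genB = 1 := by simp [eb]

lemma e_aut (φ : MulAut F2) (x : F2) :
    ea (φ x) = ea (φ genA) * ea x + ea (φ genB) * eb x ∧
    eb (φ x) = eb (φ genA) * ea x + eb (φ genB) * eb x := by
  have hg : ∀ i, ea (φ (FreeGroup.of i)) =
      ea (φ genA) * ea (FreeGroup.of i) + ea (φ genB) * eb (FreeGroup.of i) ∧
    eb (φ (FreeGroup.of i)) =
      eb (φ genA) * ea (FreeGroup.of i) + eb (φ genB) * eb (FreeGroup.of i) := by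
    intro i
    cases i
    · show ea (φ genB) = _ * ea genB + _ * eb genB ∧ eb (φ genB) = _ * ea genB + _ * eb genB
      simp
    · show ea (φ genA) = _ * ea genA + _ * eb genA ∧ eb (φ genA) = _ * ea genA + _ * eb genA
      simp
  induction x using FreeGroup.induction_on with
  | C1 => simp
  | of i => exact hg i
  | inv_of i h => 
      simp only [map_inv, ea_inv, eb_inv, h.1, h.2]
      constructor <;> ring
  | mul x y hx hy =>
      simp only [map_mul, ea_mul, eb_mul, hx.1, hx.2, hy.1, hy.2]
      constructor <;> ring

/-- The matrix of an automorphism. -/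
def mat : MulAut F2 →* Matrix (Fin 2) (Fin 2) ℤ where
  toFun φ := !![ea (φ genA), ea (φ genB); eb (φ genA), eb (φ genB)]
  map_one' := by
    ext i j; fin_cases i <;> fin_cases j <;> simp
  map_mul' φ ψ := by
    have h1 := e_aut φ (ψ genA)
    have h2 := e_aut φ (ψ genB)
    ext i j; fin_cases i <;> fin_cases j <;>
      simp [Matrix.mul_apply, Fin.sum_univ_two, h1.1, h1.2, h2.1, h2.2]

lemma mat_def (φ : MulAut F2) :
    mat φ = !![ea (φ genA), ea (φ genB); eb (φ genA), eb (φ genB)] := rfl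

lemma mat_inner (φ : MulAut F2) (h : φ ∈ innerF2) : mat φ = 1 := by
  obtain ⟨g, rfl⟩ := h
  rw [mat_def]
  ext i j; fin_cases i <;> fin_cases j <;> simp

instance innerNormal : innerF2.Normal := by
  constructor
  rintro _ ⟨g, rfl⟩ φ
  refine ⟨φ g, ?_⟩
  ext x
  simp [MulAut.conj_apply]

section Abstract

variable {Q : Type*} [Group Q] {s t : Q}

lemma normal_form (hst : s * s = t ^ (3 : ℤ)) (g : Q) (hg : g ∈ Subgroup.closure {s, t}) :
    ∃ (e j : ℤ), ∃ P ∈ Submonoid.closure {s * t, s⁻¹ * t⁻¹}, g = t ^ e * P * s ^ j := by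
  have hz : ∀ k : ℤ, s * t ^ (3 * k) = t ^ (3 * k) * s := by
    intro k
    have h3 : t ^ (3 : ℤ) = s * s := hst.symm
    rw [zpow_mul, h3]
    have : Commute s (s * s) := (Commute.refl s).mul_right (Commute.refl s)
    exact this.zpow_right k
  have ht : ∀ k : ℤ, ∀ x, (∃ (e j : ℤ), ∃ P ∈ Submonoid.closure {s * t, s⁻¹ * t⁻¹},
      x = t ^ e * P * s ^ j) → (∃ (e j : ℤ), ∃ P ∈ Submonoid.closure {s * t, s⁻¹ * t⁻¹},
      t ^ k * x = t ^ e * P * s ^ j) := by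
    rintro k x ⟨e, j, P, hP, rfl⟩
    exact ⟨k + e, j, P, hP, by group⟩
  have hL : s * t ∈ Submonoid.closure {s * t, s⁻¹ * t⁻¹} := Submonoid.subset_closure (by simp)
  have hR : s⁻¹ * t⁻¹ ∈ Submonoid.closure {s * t, s⁻¹ * t⁻¹} :=
    Submonoid.subset_closure (by simp)
  have hs0 : ∀ P ∈ Submonoid.closure {s * t, s⁻¹ * t⁻¹}, ∀ j : ℤ,
      (∃ (e j' : ℤ), ∃ P' ∈ Submonoid.closure {s * t, s⁻¹ * t⁻¹},
        s * (P * s ^ j) = t ^ e * P' * s ^ j') := by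
    intro P hP j
    induction hP using Submonoid.closure_induction_left with
    | one => exact ⟨0, j + 1, 1, Submonoid.one_mem _, by group⟩
    | mul_left x hx y hy ih =>
      rcases hx with rfl | rfl
      · refine ⟨4, j, y, hy, ?_⟩
        have : s * (s * t * y * s ^ j) = (s * s) * (t * y * s ^ j) := by group
        rw [this, hst, show (4 : ℤ) = 3 + 1 from rfl, zpow_add, zpow_one]; simp only [mul_assoc]
      · exact ⟨-1, j, y, hy, by group⟩
  have hs : ∀ x, (∃ (e j : ℤ), ∃ P ∈ Submonoid.closure {s * t, s⁻¹ * t⁻¹},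
      x = t ^ e * P * s ^ j) → (∃ (e j : ℤ), ∃ P ∈ Submonoid.closure {s * t, s⁻¹ * t⁻¹},
      s * x = t ^ e * P * s ^ j) := by
    rintro x ⟨e, j, P, hP, rfl⟩
    obtain ⟨k, hk | hk | hk⟩ : ∃ k : ℤ, e = 3 * k ∨ e = 3 * k + 1 ∨ e = 3 * k + 2 :=
      ⟨e / 3, by omega⟩
    · have e1 : s * (t ^ e * P * s ^ j) = t ^ (3 * k) * (s * (P * s ^ j)) := by
        rw [hk]
        calc _ = (s * t ^ (3 * k)) * (P * s ^ j) := by simp only [mul_assoc]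
          _ = _ := by rw [hz]; simp only [mul_assoc]
      rw [e1]
      exact ht _ _ (hs0 P hP j)
    · refine ⟨3 * k, j, s * t * P, Submonoid.mul_mem _ hL hP, ?_⟩
      rw [hk, zpow_add]
      calc _ = (s * t ^ (3 * k)) * (t ^ (1 : ℤ) * P * s ^ j) := by simp only [mul_assoc]
        _ = _ := by rw [hz, zpow_one]; simp only [mul_assoc]
    · refine ⟨3 * k + 6, j, s⁻¹ * t⁻¹ * P, Submonoid.mul_mem _ hR hP, ?_⟩
      rw [hk, zpow_add]
      have h6 : t ^ (6 : ℤ) = t ^ (3 : ℤ) * (s * s) := by rw [hst, ← zpow_add]; norm_num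
      have hz1 := hz 1
      rw [mul_one] at hz1
      calc _ = (s * t ^ (3 * k)) * (t ^ (2 : ℤ) * P * s ^ j) := by simp only [mul_assoc]
        _ = t ^ (3 * k) * (s * t ^ (3 : ℤ)) * (t⁻¹ * P * s ^ j) := by rw [hz]; group
        _ = _ := by rw [hz1, zpow_add, h6]; group
  induction hg using Subgroup.closure_induction_left with
  | one => exact ⟨0, 0, 1, Submonoid.one_mem _, by simp⟩
  | mul_left x hx y hy ih =>
    rcases hx with rfl | rfl
    · exact hs _ ih
    · have := ht 1 _ ih
      rwa [zpow_one] at this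
  | inv_mul_cancel x hx y hy ih =>
    rcases hx with rfl | rfl
    · have := hs _ (ht (-3) _ ih)
      have e : x * (t ^ (-3 : ℤ) * y) = x⁻¹ * y := by
        have : t ^ (-3 : ℤ) = (x * x)⁻¹ := by rw [hst, zpow_neg]
        rw [this]; group
      rwa [e] at this
    · have := ht (-1) _ ih
      rwa [zpow_neg_one] at this

end Abstract

/-- Outer automorphisms. -/
abbrev OutF2 : Type := MulAut F2 ⧸ innerF2

/-- The matrix of an outer automorphism. -/
def matQ : OutF2 →* Matrix (Fin 2) (Fin 2) ℤ :=
  QuotientGroup.lift innerF2 mat (fun φ h => mat_inner φ h)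

@[simp] lemma matQ_mk (φ : MulAut F2) : matQ (QuotientGroup.mk φ) = mat φ := rfl

/-- The class of `autS`. -/
def qs : OutF2 := QuotientGroup.mk autS
/-- The class of `autT`. -/
def qt : OutF2 := QuotientGroup.mk autT
/-- The class of `autE`. -/
def qe : OutF2 := QuotientGroup.mk autE

lemma qs_four : qs ^ 4 = 1 := by
  have : autS ^ 4 = 1 := aut_ext (by simp [pow_succ]) (by simp [pow_succ])
  rw [qs, ← QuotientGroup.mk_pow, this, QuotientGroup.mk_one]

lemma qs_sq : qs * qs = qt ^ (3 : ℤ) := by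
  have : autT ^ 3 = MulAut.conj (genA * genB⁻¹) * (autS * autS) :=
    aut_ext (by simp [pow_succ, mul_assoc]) (by simp [pow_succ, mul_assoc])
  have h2 : qt ^ 3 = qs * qs := by
    rw [qt, ← QuotientGroup.mk_pow, this, QuotientGroup.mk_mul]
    have : (QuotientGroup.mk (MulAut.conj (genA * genB⁻¹)) : OutF2) = 1 :=
      (QuotientGroup.eq_one_iff _).2 ⟨_, rfl⟩
    rw [this, one_mul]; rfl
  rw [← h2]; norm_cast

lemma qt_six : qt ^ 6 = 1 := by
  have h : qt ^ 3 = qs * qs := by rw [qs_sq]; norm_cast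
  rw [show 6 = 3 + 3 from rfl, pow_add, h, ← qs_four]
  simp [pow_succ, mul_assoc]

lemma qe_sq : qe * qe = 1 := by
  have : autE * autE = 1 := aut_ext (by simp) (by simp)
  rw [qe, ← QuotientGroup.mk_mul, this, QuotientGroup.mk_one]

lemma qe_s : qe * qs * qe = qs⁻¹ := by
  have : autE * autS * autE * autS = 1 := aut_ext (by simp) (by simp)
  rw [eq_inv_iff_mul_eq_one, qe, qs, ← QuotientGroup.mk_mul, ← QuotientGroup.mk_mul,
    ← QuotientGroup.mk_mul, this, QuotientGroup.mk_one]

lemma qe_t : qe * qt * qe = qs⁻¹ * qt⁻¹ * qs := by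
  have h : autT * autS * (autE * autT * autE) = autS :=
    aut_ext (by simp) (by simp)
  have : qt * qs * (qe * qt * qe) = qs := congrArg (QuotientGroup.mk : MulAut F2 → OutF2) h
  calc qe * qt * qe = qs⁻¹ * qt⁻¹ * (qt * qs * (qe * qt * qe)) := by group
    _ = _ := by rw [this]

/-- The subgroup generated by the orientation preserving generators. -/
def KQ : Subgroup OutF2 := Subgroup.closure {qs, qt}

lemma qs_mem : qs ∈ KQ := Subgroup.subset_closure (by simp)
lemma qt_mem : qt ∈ KQ := Subgroup.subset_closure (by simp)

lemma KQ_conj (k : OutF2) (hk : k ∈ KQ) : qe * k * qe ∈ KQ := by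
  have he : qe⁻¹ = qe := inv_eq_of_mul_eq_one_left qe_sq
  have : KQ ≤ KQ.comap (MulAut.conj qe).toMonoidHom := by
    conv_lhs => rw [KQ]
    rw [Subgroup.closure_le]
    rintro x (rfl | rfl)
    · show MulAut.conj qe qs ∈ KQ
      rw [MulAut.conj_apply, he, qe_s]
      exact KQ.inv_mem qs_mem
    · show MulAut.conj qe qt ∈ KQ
      rw [MulAut.conj_apply, he, qe_t]
      exact KQ.mul_mem (KQ.mul_mem (KQ.inv_mem qs_mem) (KQ.inv_mem qt_mem)) qs_mem
  have h := this hk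
  change MulAut.conj qe k ∈ KQ at h
  rwa [MulAut.conj_apply, he] at h

lemma KQ_index (φ : MulAut F2) :
    (QuotientGroup.mk φ : OutF2) ∈ KQ ∨ (QuotientGroup.mk φ : OutF2) * qe ∈ KQ := by
  have he : qe⁻¹ = qe := inv_eq_of_mul_eq_one_left qe_sq
  let H : Subgroup (MulAut F2) :=
    { carrier := {φ | (QuotientGroup.mk φ : OutF2) ∈ KQ ∨ (QuotientGroup.mk φ : OutF2) * qe ∈ KQ}
      one_mem' := Or.inl KQ.one_mem
      mul_mem' := by
        intro x y hx hy
        simp only [Set.mem_ofPred_eq, QuotientGroup.mk_mul] at *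
        rcases hx with hx | hx <;> rcases hy with hy | hy
        · exact Or.inl (KQ.mul_mem hx hy)
        · right; rw [mul_assoc]; exact KQ.mul_mem hx hy
        · right
          have := KQ.mul_mem hx (KQ_conj _ hy)
          rw [show ∀ u v : OutF2, u * qe * (qe * v * qe) = u * (qe * qe) * v * qe by
            intro u v; group, qe_sq, mul_one] at this
          exact this
        · left
          have := KQ.mul_mem hx (KQ_conj _ hy)
          rw [show ∀ u v : OutF2, u * qe * (qe * (v * qe) * qe) = u * (qe * qe) * v * (qe * qe) by
            intro u v; simp only [mul_assoc], qe_sq, mul_one, mul_one] at this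
          exact this
      inv_mem' := by
        intro x hx
        simp only [Set.mem_ofPred_eq, QuotientGroup.mk_inv] at *
        rcases hx with hx | hx
        · exact Or.inl (KQ.inv_mem hx)
        · right
          have := KQ_conj _ (KQ.inv_mem hx)
          rw [mul_inv_rev, he, ← mul_assoc, qe_sq, one_mul] at this
          exact this }
  refine nielsen H ?_ (Or.inl qs_mem) (Or.inl qt_mem) (Or.inr ?_) φ
  · intro ψ hψ
    left
    rw [(QuotientGroup.eq_one_iff ψ).2 hψ]
    exact KQ.one_mem
  · show qe * qe ∈ KQ
    rw [qe_sq]; exact KQ.one_mem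

lemma matQ_s : matQ qs = !![0, -1; 1, 0] := by
  rw [qs, matQ_mk, mat_def]; simp
lemma matQ_t : matQ qt = !![1, 1; -1, 0] := by
  rw [qt, matQ_mk, mat_def]; simp
lemma matQ_e : matQ qe = !![-1, 0; 0, 1] := by
  rw [qe, matQ_mk, mat_def]; simp
lemma matQ_st : matQ (qs * qt) = !![1, 0; 1, 1] := by
  rw [map_mul, matQ_s, matQ_t]; decide
lemma matQ_st' : matQ (qs⁻¹ * qt⁻¹) = !![1, 1; 0, 1] := by
  have h1 : qs⁻¹ = qs ^ 3 := inv_eq_of_mul_eq_one_left (by rw [← pow_succ, qs_four])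
  have h2 : qt⁻¹ = qt ^ 5 := inv_eq_of_mul_eq_one_left (by rw [← pow_succ, qt_six])
  rw [h1, h2, map_mul, map_pow, map_pow, matQ_s, matQ_t]; decide

lemma KQ_det (k : OutF2) (hk : k ∈ KQ) : (matQ k).det = 1 := by
  induction hk using Subgroup.closure_induction with
  | mem x hx =>
    rcases hx with rfl | rfl
    · rw [matQ_s]; decide
    · rw [matQ_t]; decide
  | one => simp
  | mul x y _ _ hx hy => rw [map_mul, Matrix.det_mul, hx, hy, mul_one]
  | inv x _ hx =>
    have : (matQ (x * x⁻¹)).det = 1 := by simp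
    rwa [map_mul, Matrix.det_mul, hx, one_mul] at this

lemma pos_monoid (P : OutF2) (hP : P ∈ Submonoid.closure {qs * qt, qs⁻¹ * qt⁻¹}) :
    (1 ≤ matQ P 0 0 ∧ 1 ≤ matQ P 1 1 ∧ 0 ≤ matQ P 0 1 ∧ 0 ≤ matQ P 1 0) ∧
    (P = 1 ∨ 1 ≤ matQ P 0 1 + matQ P 1 0) := by
  induction hP using Submonoid.closure_induction_left with
  | one => simp
  | mul_left x hx y hy ih =>
    obtain ⟨⟨h1, h2, h3, h4⟩, -⟩ := ih
    rw [map_mul]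
    rcases hx with rfl | rfl
    · rw [matQ_st]
      simp [Matrix.mul_apply, Fin.sum_univ_two]
      omega
    · rw [matQ_st']
      simp [Matrix.mul_apply, Fin.sum_univ_two]
      omega

/-- The matrices `T ^ r * S ^ q`. -/
def mm (r q : ℕ) : Matrix (Fin 2) (Fin 2) ℤ := !![1, 1; -1, 0] ^ r * !![0, -1; 1, 0] ^ q

lemma finite_check : ∀ r : Fin 6, ∀ q : Fin 4,
    (1 ≤ mm r q 0 0 ∧ 1 ≤ mm r q 1 1 ∧ 0 ≤ mm r q 0 1 ∧ 0 ≤ mm r q 1 0) →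
    mm r q = 1 ∧ ((r = 0 ∧ q = 0) ∨ (r = 3 ∧ q = 2)) := by
  decide +kernel

lemma zpow_red {G : Type*} [Group G] (x : G) (n : ℕ) [NeZero n] (h : x ^ n = 1) (k : ℤ) :
    ∃ r : Fin n, x ^ k = x ^ (r : ℕ) := by
  have hn : (n : ℤ) ≠ 0 := by exact_mod_cast NeZero.ne n
  have h0 := Int.emod_nonneg k hn
  have h1 := Int.emod_lt_of_pos k (show (0 : ℤ) < n by have := NeZero.pos n; omega)
  refine ⟨⟨(k % n).toNat, by omega⟩, ?_⟩
  have e : k = (n : ℤ) * (k / n) + ((k % n).toNat : ℤ) := by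
    have := Int.mul_ediv_add_emod k n
    omega
  conv_lhs => rw [e, zpow_add, zpow_mul, zpow_natCast, h, one_zpow, one_mul, zpow_natCast]

/-- An automorphism of `F₂` acting trivially on the abelianization is inner. -/
theorem mat_one_inner (φ : MulAut F2) (h : mat φ = 1) : φ ∈ innerF2 := by
  rw [← QuotientGroup.eq_one_iff]
  have hmem : (QuotientGroup.mk φ : OutF2) ∈ KQ := by
    rcases KQ_index φ with h1 | h1
    · exact h1
    · have := KQ_det _ h1
      rw [map_mul, matQ_mk, h, matQ_e] at this
      exact absurd this (by decide)
  obtain ⟨e, j, P, hP, hg⟩ := normal_form qs_sq _ hmem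
  obtain ⟨r, hr⟩ := zpow_red qt 6 qt_six (-e)
  obtain ⟨q, hq⟩ := zpow_red qs 4 qs_four (-j)
  have hPe : qt ^ (r : ℕ) * QuotientGroup.mk φ * qs ^ (q : ℕ) = P := by
    rw [← hr, ← hq, hg]; group
  have hM : matQ P = mm r q := by
    rw [mm, ← hPe, map_mul, map_mul, matQ_mk, h, mul_one, map_pow, map_pow, matQ_s, matQ_t]
  obtain ⟨h1, h2⟩ := pos_monoid P hP
  have fc := finite_check r q
  rw [← hM] at fc
  obtain ⟨f1, f2⟩ := fc h1
  have hP1 : P = 1 := by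
    rcases h2 with h2 | h2
    · exact h2
    · rw [f1] at h2; simp at h2
  have h3 : qt ^ 3 = qs * qs := by rw [qs_sq]; norm_cast
  rw [hP1] at hPe
  rcases f2 with ⟨rfl, rfl⟩ | ⟨rfl, rfl⟩
  · simpa using hPe
  · have a1 : ((3 : Fin 6) : ℕ) = 3 := rfl
    have a2 : ((2 : Fin 4) : ℕ) = 2 := rfl
    rw [a1, a2, h3, ← pow_two] at hPe
    have : (QuotientGroup.mk φ : OutF2) = (qs ^ 4)⁻¹ := by
      calc (QuotientGroup.mk φ : OutF2)
          = (qs ^ 2)⁻¹ * (qs ^ 2 * QuotientGroup.mk φ * qs ^ 2) * (qs ^ 2)⁻¹ := by group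
        _ = _ := by rw [hPe]; group
    rw [this, qs_four, inv_one]

/-! ## Part D: automorphisms preserve the commutator up to conjugacy and inversion -/

/-- The commutator `[a,b]`. -/
def cc : F2 := genA * genB * genA⁻¹ * genB⁻¹

lemma aut_cc (φ : MulAut F2) : ∃ g : F2, φ cc = g * cc * g⁻¹ ∨ φ cc = g * cc⁻¹ * g⁻¹ := by
  let H : Subgroup (MulAut F2) :=
    { carrier := {φ | ∃ g : F2, φ cc = g * cc * g⁻¹ ∨ φ cc = g * cc⁻¹ * g⁻¹}
      one_mem' := ⟨1, by simp⟩
      mul_mem' := by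
        rintro x y ⟨g, hg⟩ ⟨k, hk⟩
        refine ⟨x k * g, ?_⟩
        rcases hg with hg | hg <;> rcases hk with hk | hk <;>
          simp [hk, hg, mul_assoc]
      inv_mem' := by
        rintro x ⟨g, hg⟩
        refine ⟨(x⁻¹ g)⁻¹, ?_⟩
        rcases hg with hg | hg
        · left
          have := congrArg (fun y => x⁻¹ (g⁻¹ * y * g)) hg
          simp only [map_mul, map_inv, MulAut.inv_apply_self] at this
          simp only [inv_inv]
          rw [eq_comm, this]; simp [mul_assoc]
        · right
          have := congrArg (fun y => x⁻¹ (g⁻¹ * y⁻¹ * g)) hg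
          simp only [map_mul, map_inv, MulAut.inv_apply_self] at this
          simp only [inv_inv]
          rw [eq_comm, this]; simp [mul_assoc] }
  refine nielsen H ?_ ?_ ?_ ?_ φ
  · rintro _ ⟨g, rfl⟩
    exact ⟨g, Or.inl rfl⟩
  · exact ⟨genA⁻¹, Or.inl (by simp [cc, mul_assoc])⟩
  · exact ⟨genA * genB⁻¹, Or.inl (by simp [cc, mul_assoc])⟩
  · exact ⟨genA⁻¹, Or.inr (by simp [cc, mul_assoc])⟩

section WreathTest

open scoped commutatorElement

/-! ## Part E: a wreath product test -/

/-- The function defining the image of `b` in the wreath product. -/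
def fval (i j : ℤ) : Equiv.Perm (Fin 3) :=
  if j = 0 then (if 0 ≤ i then 1 else if -2 ≤ i then Equiv.swap 0 1
    else Equiv.swap 1 2 * Equiv.swap 0 1)
  else if j = -3 then (if 0 ≤ i then 1 else Equiv.swap 0 1) else 1

/-- The homomorphism to the wreath product. -/
def pw : F2 →* (Equiv.Perm (Fin 3) ≀ᵣ Multiplicative (ℤ × ℤ)) :=
  FreeGroup.lift (fun i => cond i ⟨1, Multiplicative.ofAdd (1, 0)⟩
    ⟨fun z => fval (Multiplicative.toAdd z).1 (Multiplicative.toAdd z).2,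
      Multiplicative.ofAdd (0, 1)⟩)

lemma pw_a : pw genA = ⟨1, Multiplicative.ofAdd (1, 0)⟩ := by simp [pw, genA]
lemma pw_b : pw genB = ⟨fun z => fval (Multiplicative.toAdd z).1 (Multiplicative.toAdd z).2,
      Multiplicative.ofAdd (0, 1)⟩ := by simp [pw, genB]

lemma pw_right (x : F2) : (pw x).right = ab x := by
  have : (RegularWreathProduct.rightHom.comp pw) = ab := by
    apply FreeGroup.ext_hom
    intro i
    cases i
    · show (pw genB).right = ab genB
      simp [pw_b]
    · show (pw genA).right = ab genA
      simp [pw_a]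
  exact DFunLike.congr_fun this x

/-- The coordinate at the identity. -/
def th (x : F2) : Equiv.Perm (Fin 3) := (pw x).left 1

lemma th_one : th 1 = 1 := by simp [th]

lemma th_mul {x y : F2} (h : ab x = 1) : th (x * y) = th x * th y := by
  simp [th, pw_right, h]

lemma th_inv {x : F2} (h : ab x = 1) : th x⁻¹ = (th x)⁻¹ := by
  simp [th, pw_right, h]

lemma th_comm {x y : F2} (hx : ab x = 1) (hy : ab y = 1) : th ⁅x, y⁆ = ⁅th x, th y⁆ := by
  rw [commutatorElement_def, commutatorElement_def, th_mul (by simp [hx, hy]), th_mul (by simp [hx, hy]),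
    th_mul hx, th_inv hx, th_inv hy]

lemma ab_comm (x y : F2) : ab ⁅x, y⁆ = 1 := by
  rw [map_commutatorElement, commutatorElement_eq_one_iff_mul_comm, mul_comm]

lemma ab_cc : ab cc = 1 := ab_comm genA genB

/-- Coordinates of the commutator. -/
def hh (i j : ℤ) : Equiv.Perm (Fin 3) := fval (i - 1) j * (fval i j)⁻¹

lemma pw_cc (z : Multiplicative (ℤ × ℤ)) : (pw cc).left z =
    hh (Multiplicative.toAdd z).1 (Multiplicative.toAdd z).2 := by
  simp only [cc, map_mul, map_inv, pw_a, pw_b, hh]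
  simp [sub_eq_add_neg, add_comm]

lemma th_conj (g : F2) : th (g * cc * g⁻¹) = th g * hh (- ea g) (- eb g) * (th g)⁻¹ := by
  simp [th, pw_right, pw_cc, ab_cc, ea, eb]

lemma th_conj_inv (g : F2) :
    th (g * cc⁻¹ * g⁻¹) = th g * (hh (- ea g) (- eb g))⁻¹ * (th g)⁻¹ := by
  have : g * cc⁻¹ * g⁻¹ = (g * cc * g⁻¹)⁻¹ := by group
  rw [this, th_inv (by simp [ab_cc]), th_conj]; group

lemma hh_one (i j : ℤ) (h1 : ¬ (i = 0 ∧ j = 0)) (h2 : ¬ (i = -2 ∧ j = 0))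
    (h3 : ¬ (i = 0 ∧ j = -3)) : hh i j = 1 := by
  unfold hh fval
  rw [mul_inv_eq_one]
  split_ifs <;> first | rfl | omega

/-- The element `w`. -/
def ww : F2 := ⁅⁅cc, genA ^ 2 * cc * (genA ^ 2)⁻¹⁆, genB ^ 3 * cc * (genB ^ 3)⁻¹⁆

lemma th_ww : th ww ≠ 1 := by
  have a2 : th (genA ^ 2) = 1 := by simp [th, pw_a, pow_succ]
  have b3 : th (genB ^ 3) = 1 := by
    simp [th, pw_b, pow_succ, fval]
  have c1 : th cc = hh 0 0 := by simpa [th_one] using th_conj 1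
  rw [ww, th_comm (ab_comm _ _) (by simp [ab_cc]), th_comm ab_cc (by simp [ab_cc]), th_conj,
    th_conj, a2, b3, c1]
  have e1 : ea (genA ^ 2) = 2 := by simp [pow_succ]
  have e2 : eb (genA ^ 2) = 0 := by simp [pow_succ]
  have e3 : ea (genB ^ 3) = 0 := by simp [pow_succ]
  have e4 : eb (genB ^ 3) = 3 := by simp [pow_succ]
  rw [e1, e2, e3, e4]
  decide +kernel

lemma th_piece (φ : MulAut F2) (g : F2) (hg : φ cc = g * cc * g⁻¹ ∨ φ cc = g * cc⁻¹ * g⁻¹)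
    (u : F2) (h : hh (-(ea (φ u) + ea g)) (-(eb (φ u) + eb g)) = 1) :
    th (φ (u * cc * u⁻¹)) = 1 := by
  have h' : hh (- ea (φ u * g)) (- eb (φ u * g)) = 1 := by simpa using h
  rcases hg with hg | hg
  · have : φ (u * cc * u⁻¹) = (φ u * g) * cc * (φ u * g)⁻¹ := by
      simp [hg, mul_assoc]
    rw [this, th_conj, h']; group
  · have : φ (u * cc * u⁻¹) = (φ u * g) * cc⁻¹ * (φ u * g)⁻¹ := by
      simp [hg, mul_assoc]
    rw [this, th_conj_inv, h']; group

lemma th_aut (φ : MulAut F2) (hφ : φ ∉ innerF2) : th (φ ww) = 1 := by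
  obtain ⟨g, hg⟩ := aut_cc φ
  have p1 := th_piece φ g hg 1
  have p2 := th_piece φ g hg (genA ^ 2)
  have p3 := th_piece φ g hg (genB ^ 3)
  have k1 : ab (φ cc) = 1 := by rcases hg with hg | hg <;> simp [hg, ab_cc]
  have k2 : ∀ u, ab (φ (u * cc * u⁻¹)) = 1 := by intro u; simp [k1]
  have hw : th (φ ww) = ⁅⁅th (φ cc), th (φ (genA ^ 2 * cc * (genA ^ 2)⁻¹))⁆,
      th (φ (genB ^ 3 * cc * (genB ^ 3)⁻¹))⁆ := by
    rw [ww, map_commutatorElement, map_commutatorElement, th_comm (ab_comm _ _) (k2 _),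
      th_comm k1 (k2 _)]
  rw [hw]
  simp only [one_mul, mul_one, inv_one, map_one, ea_one, eb_one, zero_add] at p1
  simp only [map_mul, pow_succ, pow_zero, one_mul, ea_mul, eb_mul] at p2 p3
  simp only [map_mul, pow_succ, pow_zero, one_mul]
  have inv : mat φ * mat φ⁻¹ = 1 := by rw [← map_mul, mul_inv_cancel, map_one]
  have inv' : mat φ⁻¹ * mat φ = 1 := by rw [← map_mul, inv_mul_cancel, map_one]
  have hcol1 : ¬ (ea (φ genA) = 0 ∧ eb (φ genA) = 0) := by
    rintro ⟨h1, h2⟩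
    have := congrFun (congrFun inv' 0) 0
    rw [mat_def φ] at this
    simp [Matrix.mul_apply, Fin.sum_univ_two, h1, h2] at this
  have hcol2 : ¬ (ea (φ genB) = 0 ∧ eb (φ genB) = 0) := by
    rintro ⟨h1, h2⟩
    have := congrFun (congrFun inv' 1) 1
    rw [mat_def φ] at this
    simp [Matrix.mul_apply, Fin.sum_univ_two, h1, h2] at this
  by_cases q1 : hh (-ea g) (-eb g) = 1
  · rw [p1 q1]; simp
  by_cases q2 : hh (-(ea (φ genA) + ea (φ genA) + ea g)) (-(eb (φ genA) + eb (φ genA) + eb g)) = 1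
  · rw [p2 q2]; simp
  by_cases q3 : hh (-(ea (φ genB) + ea (φ genB) + ea (φ genB) + ea g))
      (-(eb (φ genB) + eb (φ genB) + eb (φ genB) + eb g)) = 1
  · rw [p3 q3]; simp
  exfalso
  apply hφ
  apply mat_one_inner
  have cases3 : ∀ i j : ℤ, hh i j ≠ 1 → (i = 0 ∧ j = 0) ∨ (i = -2 ∧ j = 0) ∨ (i = 0 ∧ j = -3) := by
    intro i j h
    by_contra hc
    push Not at hc
    exact h (hh_one i j (fun x => hc.1 x.1 x.2) (fun x => hc.2.1 x.1 x.2)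
      (fun x => hc.2.2 x.1 x.2))
  have r1 := cases3 _ _ q1
  have r2 := cases3 _ _ q2
  have r3 := cases3 _ _ q3
  have fin : ea (φ genA) = 1 ∧ eb (φ genA) = 0 ∧ ea (φ genB) = 0 ∧ eb (φ genB) = 1 := by
    rcases r1 with r1 | r1 | r1 <;> rcases r2 with r2 | r2 | r2 <;>
      rcases r3 with r3 | r3 | r3 <;> omega
  rw [mat_def, fin.1, fin.2.1, fin.2.2.1, fin.2.2.2]
  decide

lemma ab_aut_ww (φ : MulAut F2) : ab (φ ww) = 1 := by
  rw [ww, map_commutatorElement]; exact ab_comm _ _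

/-- The subgroup detecting `w`. -/
def Sub : Subgroup F2 where
  carrier := {x | ab x = 1 ∧ th x = 1}
  one_mem' := ⟨map_one _, th_one⟩
  mul_mem' := by
    rintro x y ⟨h1, h2⟩ ⟨h3, h4⟩
    exact ⟨by rw [map_mul, h1, h3, mul_one], by rw [th_mul h1, h2, h4, mul_one]⟩
  inv_mem' := by
    rintro x ⟨h1, h2⟩
    exact ⟨by rw [map_inv, h1, inv_one], by rw [th_inv h1, h2, inv_one]⟩

end WreathTest

/-- **Corollary 1.7 / 8.24.** There is a conjugacy class `c` of `F₂` (namely that of some `w`)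
which is disjoint from the subgroup of `F₂` generated by the conjugacy classes `g·c`,
`g ∈ Out(F₂) \ {e}`; equivalently, no conjugate of `w` lies in the subgroup generated by
`{φ(x) : x conjugate to w, φ ∈ Aut(F₂) non-inner}`. -/
theorem conjugacy_class_disjoint_from_translates :
    ∃ w : F2, ∀ x : F2, IsConj w x →
      x ∉ Subgroup.closure
        {y : F2 | ∃ φ : MulAut F2, φ ∉ innerF2 ∧ IsConj (φ w) y} := by
  refine ⟨ww, ?_⟩
  intro x hx hmem
  have hle : Subgroup.closure {y : F2 | ∃ φ : MulAut F2, φ ∉ innerF2 ∧ IsConj (φ ww) y} ≤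
      Sub.comap (MulAut.conj (isConj_iff.1 hx).choose⁻¹).toMonoidHom := by
    rw [Subgroup.closure_le]
    rintro y ⟨φ, hφ, hy⟩
    obtain ⟨g, rfl⟩ := isConj_iff.1 hy
    generalize (isConj_iff.1 hx).choose⁻¹ = k
    have h : MulAut.conj (k * g) * φ ∉ innerF2 := by
      intro h
      apply hφ
      have := innerF2.mul_mem (innerF2.inv_mem (⟨k * g, rfl⟩ : MulAut.conj (k * g) ∈ innerF2)) h
      rwa [inv_mul_cancel_left] at this
    have e : MulAut.conj k (g * φ ww * g⁻¹) = (MulAut.conj (k * g) * φ) ww := by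
      simp [mul_assoc]
    show MulAut.conj k (g * φ ww * g⁻¹) ∈ Sub
    rw [e]
    exact ⟨ab_aut_ww _, th_aut _ h⟩
  have h := hle hmem
  change MulAut.conj (isConj_iff.1 hx).choose⁻¹ x ∈ Sub at h
  have hs := (isConj_iff.1 hx).choose_spec
  generalize (isConj_iff.1 hx).choose = k at h hs
  rw [← hs] at h
  have e : MulAut.conj k⁻¹ (k * ww * k⁻¹) = ww := by simp [mul_assoc]
  rw [e] at h
  exact th_ww h.2


end IRSPaper
end

section
/- Let G and H be countable discrete groups with G infinite and H nontrivial. Then the wreath product H ≀ G = (⊕_G H) ⋊ G admits a family of cardinality continuum of pairwise distinct invariant random subgroups that are all non-atomic and weakly mixing (with respect to the conjugation action of H ≀ G). -/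
open MeasureTheory

namespace IRSPaper


/-! ## The wreath product `H ≀ G = (⊕_G H) ⋊ G` -/

/-- The restricted direct product (direct sum) `⊕_G H`: the subgroup of `G → H` of finitely
supported functions. -/
def DirectSumSub (G H : Type*) [Group H] : Subgroup (G → H) where
  carrier := {f : G → H | (Function.mulSupport f).Finite}
  one_mem' := by
    simp [Function.mulSupport_one]
  mul_mem' := by
    intro f g hf hg
    exact ((Set.Finite.union hf hg).subset (Function.mulSupport_mul f g))
  inv_mem' := by
    intro f hf
    simpa [Function.mulSupport_inv] using hf

lemma shift_mem_directSumSub {G H : Type*} [Group G] [Group H]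
    (g : G) (f : ↥(DirectSumSub G H)) :
    (Function.mulSupport fun x : G => (f : G → H) (g * x)).Finite := by
  have h : (Function.mulSupport fun x : G => (f : G → H) (g * x)) =
      (fun x : G => g * x) ⁻¹' Function.mulSupport (f : G → H) :=
    Function.mulSupport_comp_eq_preimage _ _
  rw [h]
  exact Set.Finite.preimage (Set.injOn_of_injective (mul_right_injective g)) f.2

/-- The shift automorphism of `⊕_G H` associated to `g ∈ G`: `(g · f)(x) = f(g⁻¹x)`. -/
def shiftAut (G H : Type*) [Group G] [Group H] (g : G) :
    ↥(DirectSumSub G H) ≃* ↥(DirectSumSub G H) where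
  toFun f := ⟨fun x => (f : G → H) (g⁻¹ * x), shift_mem_directSumSub g⁻¹ f⟩
  invFun f := ⟨fun x => (f : G → H) (g * x), shift_mem_directSumSub g f⟩
  left_inv f := by
    apply Subtype.ext
    funext x
    simp [mul_assoc]
  right_inv f := by
    apply Subtype.ext
    funext x
    simp [mul_assoc]
  map_mul' f₁ f₂ := by
    apply Subtype.ext
    funext x
    rfl

/-- The shift action `G →* Aut(⊕_G H)`. -/
def shiftHom (G H : Type*) [Group G] [Group H] : G →* MulAut ↥(DirectSumSub G H) where
  toFun := shiftAut G H
  map_one' := by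
    apply MulEquiv.ext
    intro f
    apply Subtype.ext
    funext x
    simp [shiftAut]
  map_mul' g₁ g₂ := by
    apply MulEquiv.ext
    intro f
    apply Subtype.ext
    funext x
    simp [shiftAut, mul_assoc]

/-- The wreath product `H ≀ G = (⊕_G H) ⋊ G`. -/
def Wreath (G H : Type*) [Group G] [Group H] : Type _ :=
  SemidirectProduct ↥(DirectSumSub G H) G (shiftHom G H)

noncomputable instance (G H : Type*) [Group G] [Group H] : Group (Wreath G H) :=
  SemidirectProduct.instGroup

/-! ### Measurability on the space of subgroups -/

lemma measurableSet_mem_sub {Γ : Type*} [Group Γ] (γ : Γ) :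
    MeasurableSet {K : Subgroup Γ | γ ∈ K} := by
  classical
  have hc : Continuous (fun (K : Subgroup Γ) (g : Γ) => @decide (g ∈ K) (Classical.dec _)) :=
    continuous_induced_dom
  have h1 : Continuous (fun (K : Subgroup Γ) => @decide (γ ∈ K) (Classical.dec _)) :=
    (continuous_apply γ).comp hc
  have h2 : MeasurableSet ((fun (K : Subgroup Γ) => @decide (γ ∈ K) (Classical.dec _)) ⁻¹'
      {true}) := h1.measurable (measurableSet_singleton true)
  convert h2 using 1
  ext K
  simp

lemma measurable_to_sub {Γ α : Type*} [Group Γ] [Countable Γ] [MeasurableSpace α]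
    (f : α → Subgroup Γ) (h : ∀ γ, MeasurableSet {a | γ ∈ f a}) : Measurable f := by
  classical
  have hb : instMeasSub Γ = MeasurableSpace.comap
      (fun (K : Subgroup Γ) (g : Γ) => @decide (g ∈ K) (Classical.dec _)) inferInstance := by
    have hpi : (inferInstance : MeasurableSpace (Γ → Bool)) = borel (Γ → Bool) :=
      BorelSpace.measurable_eq
    rw [hpi]
    exact (borel_comap (f := fun (K : Subgroup Γ) (g : Γ) => @decide (g ∈ K) (Classical.dec _)))
  rw [hb]
  rw [measurable_comap_iff]
  refine measurable_pi_iff.mpr fun γ => ?_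
  refine measurable_to_bool ?_
  convert h γ using 1
  ext a
  simp

lemma measurableSet_singleton_sub {Γ : Type*} [Group Γ] [Countable Γ] (K : Subgroup Γ) :
    MeasurableSet ({K} : Set (Subgroup Γ)) := by
  have : ({K} : Set (Subgroup Γ)) = ⋂ γ : Γ, {L : Subgroup Γ | γ ∈ L ↔ γ ∈ K} := by
    ext L
    simp [SetLike.ext_iff]
  rw [this]
  refine MeasurableSet.iInter fun γ => ?_
  by_cases hγ : γ ∈ K
  · simpa [hγ] using measurableSet_mem_sub γ
  · have h : {L : Subgroup Γ | γ ∈ L ↔ γ ∈ K} = {L : Subgroup Γ | γ ∈ L}ᶜ := by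
      ext L
      simp [hγ]
    rw [h]
    exact (measurableSet_mem_sub γ).compl

lemma mem_conjSub {Γ : Type*} [Group Γ] (d w : Γ) (K : Subgroup Γ) :
    w ∈ conjSub d K ↔ d⁻¹ * w * d ∈ K := by
  unfold conjSub
  rw [Subgroup.mem_map]
  constructor
  · rintro ⟨x, hx, rfl⟩
    simpa [mul_assoc] using hx
  · intro h
    exact ⟨_, h, by simp [mul_assoc]⟩

lemma measurable_conjSub {Γ : Type*} [Group Γ] [Countable Γ] (d : Γ) :
    Measurable (conjSub d : Subgroup Γ → Subgroup Γ) := by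
  refine measurable_to_sub _ fun γ => ?_
  simp only [mem_conjSub]
  exact measurableSet_mem_sub _

/-! ### Ergodicity of generalized Bernoulli shifts -/

open scoped symmDiff in
lemma bernoulli_ergodic {I S T : Type*} [MeasurableSpace S] (ρ : Measure S)
    [IsProbabilityMeasure ρ] (e : T → Equiv.Perm I)
    (hdis : ∀ F : Finset I, ∃ t, ∀ i ∈ F, e t i ∉ F)
    (s : Set (I → S)) (hs : MeasurableSet s)
    (hinv : ∀ t, (fun (x : I → S) i => x (e t i)) ⁻¹' s = s) :
    Measure.infinitePi (fun _ : I => ρ) s = 0 ∨ Measure.infinitePi (fun _ : I => ρ) sᶜ = 0 := by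
  classical
  set μ := Measure.infinitePi (fun _ : I => ρ) with hμ
  have key : ∀ ε : ℝ, 0 < ε → |μ.real s - μ.real s * μ.real s| ≤ 4 * ε := by
    intro ε hε
    obtain ⟨C, hC, hCs⟩ := exists_measure_symmDiff_lt_of_generateFrom_isSetRing (μ := μ)
      (isSetRing_measurableCylinders (α := fun _ : I => S))
      ⟨{Set.univ}, by simp, by simpa using univ_mem_measurableCylinders (fun _ : I => S), by simp⟩
      generateFrom_measurableCylinders.symm hs (ENNReal.ofReal_pos.mpr hε)
    have hCm : MeasurableSet C := MeasurableSet.of_mem_measurableCylinders hC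
    obtain ⟨F, B, hB, rfl⟩ := (mem_measurableCylinders C).1 hC
    obtain ⟨t, ht⟩ := hdis F
    set τ : (I → S) → (I → S) := fun x i => x (e t i) with hτ
    have hτm : Measurable τ := by fun_prop
    have hmap : μ.map τ = μ :=
      Measure.map_infinitePi_infinitePi_of_inj (P := fun _ : I => ρ) (e t).injective
    have hpre : ∀ A, MeasurableSet A → μ (τ ⁻¹' A) = μ A := by
      intro A hA
      rw [← Measure.map_apply hτm hA, hmap]
    set C : Set (I → S) := cylinder (α := fun _ => S) F B with hCdef
    have hCs' : μ ((τ ⁻¹' C) ∆ s) < ENNReal.ofReal ε := by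
      have : (τ ⁻¹' C) ∆ s = τ ⁻¹' (C ∆ s) := by
        rw [Set.preimage_symmDiff, hinv t]
      rw [this, hpre _ (hCm.symmDiff hs)]
      exact hCs
    have hind : μ (C ∩ τ ⁻¹' C) = μ C * μ C := by
      have hi : ProbabilityTheory.iIndepFun (fun (i : I) (x : I → S) => x i) μ :=
        ProbabilityTheory.iIndepFun_infinitePi (P := fun _ : I => ρ) (X := fun _ x => x)
          (fun _ => measurable_id)
      have hd : Disjoint F (F.map (e t).toEmbedding) := by
        rw [Finset.disjoint_right]
        intro j hj
        obtain ⟨i, hi, rfl⟩ := Finset.mem_map.1 hj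
        exact ht i hi
      have h2 := hi.indepFun_finset F (F.map (e t).toEmbedding) hd (fun i => measurable_pi_apply i)
      have h3 := h2.measure_inter_preimage_eq_mul B
        {y : (F.map (e t).toEmbedding) → S |
          (fun i : F => y ⟨e t i, Finset.mem_map_of_mem _ i.2⟩) ∈ B} hB ?_
      · have e1 : (fun (a : I → S) (i : F) => a i) ⁻¹' B = C := rfl
        have e2 : (fun (a : I → S) (i : (F.map (e t).toEmbedding)) => a i) ⁻¹'
          {y : (F.map (e t).toEmbedding) → S |
          (fun i : F => y ⟨e t i, Finset.mem_map_of_mem _ i.2⟩) ∈ B} = τ ⁻¹' C := rfl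
        rw [e1, e2, hpre C hCm] at h3
        exact h3
      · exact measurableSet_preimage (by fun_prop) hB
    have hind' : μ.real (C ∩ τ ⁻¹' C) = μ.real C * μ.real C := by
      simp [Measure.real, hind]
    have hC'm : MeasurableSet (τ ⁻¹' C) := hτm hCm
    have r1 : μ.real (C ∆ s) ≤ ε := ENNReal.toReal_le_of_le_ofReal hε.le hCs.le
    have r2 : μ.real ((τ ⁻¹' C) ∆ s) ≤ ε := ENNReal.toReal_le_of_le_ofReal hε.le hCs'.le
    have r3 : μ.real ((C ∩ τ ⁻¹' C) ∆ s) ≤ 2 * ε := by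
      have hsub : (C ∩ τ ⁻¹' C) ∆ s ⊆ (C ∆ s) ∪ ((τ ⁻¹' C) ∆ s) := by
        intro x
        simp only [Set.mem_symmDiff, Set.mem_inter_iff, Set.mem_union]
        tauto
      have := measureReal_mono (μ := μ) hsub
      have := measureReal_union_le (μ := μ) (C ∆ s) ((τ ⁻¹' C) ∆ s)
      linarith
    have a1 := abs_measureReal_sub_le_measureReal_symmDiff (μ := μ)
      hCm.nullMeasurableSet hs.nullMeasurableSet
    have a2 := abs_measureReal_sub_le_measureReal_symmDiff (μ := μ)
      (hCm.inter hC'm).nullMeasurableSet hs.nullMeasurableSet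
    rw [hind'] at a2
    have c0 : 0 ≤ μ.real C := measureReal_nonneg
    have c1 : μ.real C ≤ 1 := measureReal_le_one
    have s0 : 0 ≤ μ.real s := measureReal_nonneg
    have s1 : μ.real s ≤ 1 := measureReal_le_one
    generalize μ.real C = c at *
    generalize μ.real s = a at *
    have b1 := abs_le.1 (a1.trans r1)
    have b2 := abs_le.1 (a2.trans r3)
    rw [abs_le]
    constructor <;> nlinarith
  have h0 : μ.real s - μ.real s * μ.real s = 0 := by
    by_contra hne
    have := key (|μ.real s - μ.real s * μ.real s| / 8) (by positivity)
    have := abs_pos.mpr hne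
    linarith
  have h1 : μ.real s = 0 ∨ μ.real s = 1 := by
    have : μ.real s * (1 - μ.real s) = 0 := by linarith
    rcases mul_eq_zero.1 this with h | h
    · exact Or.inl h
    · exact Or.inr (by linarith)
  rcases h1 with h | h
  · left
    exact (measureReal_eq_zero_iff).1 h
  · right
    rw [← measureReal_eq_zero_iff, probReal_compl_eq_one_sub hs, h, sub_self]

lemma exists_disj_translate {G : Type*} [Group G] [Infinite G] (F : Finset (G ⊕ G)) :
    ∃ g : G, ∀ i ∈ F, (Equiv.sumCongr (Equiv.mulLeft g) (Equiv.mulLeft g)) i ∉ F := by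
  classical
  let p : G ⊕ G → G := Sum.elim id id
  let D : Finset G := (F ×ˢ F).image (fun q => p q.1 * (p q.2)⁻¹)
  obtain ⟨g, hg⟩ := Infinite.exists_notMem_finset D
  refine ⟨g, fun i hi hi' => hg ?_⟩
  refine Finset.mem_image.2 ⟨(_, i), Finset.mem_product.2 ⟨hi', hi⟩, ?_⟩
  rcases i with i | i <;> simp [p]

lemma map_sumElim_prod {G S : Type*} [MeasurableSpace S] (ρ : Measure S)
    [IsProbabilityMeasure ρ] :
    ((Measure.infinitePi (fun _ : G => ρ)).prod (Measure.infinitePi (fun _ : G => ρ))).map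
      (fun p => (Sum.elim p.1 p.2 : G ⊕ G → S)) = Measure.infinitePi (fun _ : G ⊕ G => ρ) := by
  classical
  have hm : Measurable (fun p : (G → S) × (G → S) => (Sum.elim p.1 p.2 : G ⊕ G → S)) := by
    refine measurable_pi_iff.2 fun i => ?_
    rcases i with i | i <;> simp only [Sum.elim_inl, Sum.elim_inr] <;> fun_prop
  refine Measure.eq_infinitePi _ fun s t ht => ?_
  rw [Measure.map_apply hm (MeasurableSet.pi s.countable_toSet fun i _ => ht i)]
  have : (fun p : (G → S) × (G → S) => (Sum.elim p.1 p.2 : G ⊕ G → S)) ⁻¹' (Set.pi s t) =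
      (Set.pi (s.toLeft : Set G) (fun i => t (Sum.inl i))) ×ˢ
      (Set.pi (s.toRight : Set G) (fun i => t (Sum.inr i))) := by
    ext p
    simp [Set.mem_pi]
  rw [this, Measure.prod_prod, Measure.infinitePi_pi _ (fun i _ => ht _),
    Measure.infinitePi_pi _ (fun i _ => ht _)]
  conv_rhs => rw [← Finset.toLeft_disjSum_toRight (u := s)]
  rw [Finset.prod_disjSum]

/-! ### The equivariant map from subsets of `G` to subgroups of the wreath product -/

lemma wreath_countable (G H : Type*) [Group G] [Group H] [Countable G] [Countable H] :
    Countable (Wreath G H) := by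
  classical
  have h1 : Countable (DirectSumSub G H) := by
    have hinj : Function.Injective (fun f : DirectSumSub G H =>
        (⟨(f.2 : (Function.mulSupport (f : G → H)).Finite).toFinset, fun i => (f : G → H) i⟩ :
          Σ s : Finset G, (s → H))) := by
      intro f f' h
      apply Subtype.ext
      have hs := (Sigma.mk.inj_iff.1 h).1
      have key : ∀ (s s' : Finset G) (u u' : G → H),
          (⟨s, fun i => u i⟩ : Σ s : Finset G, (s → H)) = ⟨s', fun i => u' i⟩ →
          ∀ i ∈ s, u i = u' i := by
        intro s s' u u' h i hi
        obtain ⟨rfl, h2⟩ := Sigma.mk.inj_iff.1 h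
        exact congrFun (eq_of_heq h2) ⟨i, hi⟩
      funext i
      by_cases hi : i ∈ (f.2 : (Function.mulSupport (f : G → H)).Finite).toFinset
      · exact key _ _ _ _ h i hi
      · have hi' := hi
        rw [hs] at hi'
        have z : ∀ u : DirectSumSub G H,
            i ∉ (u.2 : (Function.mulSupport (u : G → H)).Finite).toFinset → (u : G → H) i = 1 := by
          intro u hu
          by_contra hne
          exact hu ((Set.Finite.mem_toFinset _).2 hne)
        rw [z f hi, z f' hi']
    exact hinj.countable
  have hinj : Function.Injective (fun w : Wreath G H =>
      ((SemidirectProduct.left w : DirectSumSub G H), (SemidirectProduct.right w : G))) := by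
    intro a b h
    exact SemidirectProduct.ext (Prod.ext_iff.1 h).1 (Prod.ext_iff.1 h).2
  exact hinj.countable

/-- The `⊕_G H` component, as a function. -/
def wl {G H : Type*} [Group G] [Group H] (w : Wreath G H) : G → H :=
  ((SemidirectProduct.left w : DirectSumSub G H) : G → H)

/-- The `G` component. -/
def wr {G H : Type*} [Group G] [Group H] (w : Wreath G H) : G := SemidirectProduct.right w

/-- The subgroup of `⊕_G H ≤ H ≀ G` of functions supported in `{g | x g = true}`. -/
def suppSub (G H : Type*) [Group G] [Group H] (x : G → Bool) : Subgroup (Wreath G H) where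
  carrier := {w | wr w = 1 ∧
    ∀ i, x i = false → wl w i = 1}
  one_mem' := ⟨rfl, fun _ _ => rfl⟩
  mul_mem' := by
    rintro a b ⟨ha, ha'⟩ ⟨hb, hb'⟩
    refine ⟨?_, fun i hi => ?_⟩
    · change wr a * wr b = 1
      rw [ha, hb, one_mul]
    · change wl a i *
        wl b ((wr a)⁻¹ * i) = 1
      rw [ha, inv_one, one_mul, ha' i hi, hb' i hi, one_mul]
  inv_mem' := by
    rintro a ⟨ha, ha'⟩
    refine ⟨?_, fun i hi => ?_⟩
    · change (wr a)⁻¹ = 1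
      rw [ha, inv_one]
    · change (wl a (((wr a)⁻¹)⁻¹ * i))⁻¹ = 1
      rw [ha, inv_one, inv_one, one_mul, ha' i hi, inv_one]

lemma mem_suppSub {G H : Type*} [Group G] [Group H] (x : G → Bool) (w : Wreath G H) :
    w ∈ suppSub G H x ↔ wr w = 1 ∧
    ∀ i, x i = false → wl w i = 1 := Iff.rfl

lemma conjSub_suppSub {G H : Type*} [Group G] [Group H] (d : Wreath G H) (x : G → Bool) :
    conjSub d (suppSub G H x) =
      suppSub G H (fun i => x ((wr d)⁻¹ * i)) := by
  ext w
  rw [mem_conjSub, mem_suppSub, mem_suppSub]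
  have hr : wr (d⁻¹ * w * d : Wreath G H) =
    (wr d)⁻¹ * wr w * wr d := rfl
  set g : G := wr d with hg
  have hl : ∀ i, wl (d⁻¹ * w * d : Wreath G H) i =
    (wl d ((g⁻¹)⁻¹ * i))⁻¹ *
    wl w ((g⁻¹)⁻¹ * i) *
    wl d ((g⁻¹ * wr w)⁻¹ * i) :=
    fun i => rfl
  rw [hr]
  have e1 : g⁻¹ * wr w * g = 1 ↔ wr w = 1 := by
    constructor
    · intro h
      have : wr w = g * (g⁻¹ * wr w * g) * g⁻¹ := by
        group
      rw [this, h]; group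
    · intro h
      rw [h]; group
  rw [e1]
  refine and_congr_right fun hw => ?_
  have e2 : ∀ i, wl (d⁻¹ * w * d : Wreath G H) i = 1 ↔
      wl w (g * i) = 1 := by
    intro i
    rw [hl, hw, mul_one, inv_inv]
    have := conj_eq_one_iff (a := (wl d (g * i))⁻¹)
      (b := wl w (g * i))
    rw [inv_inv] at this
    exact this
  simp only [e2]
  constructor
  · intro h i hi
    simpa using h _ hi
  · intro h i hi
    exact h (g * i) (by simpa using hi)

/-- The element of the wreath product with value `h` at `i` and `1` elsewhere. -/
noncomputable def singleW (G H : Type*) [Group G] [Group H] (i : G) (h : H) : Wreath G H :=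
  letI := Classical.decEq G
  ⟨⟨Pi.mulSingle i h, (Set.finite_singleton i).subset Pi.mulSupport_mulSingle_subset⟩, 1⟩

lemma singleW_mem {G H : Type*} [Group G] [Group H] (i : G) {h : H} (hh : h ≠ 1)
    (x : G → Bool) : singleW G H i h ∈ suppSub G H x ↔ x i = true := by
  classical
  rw [mem_suppSub]
  constructor
  · rintro ⟨-, h2⟩
    by_contra hx
    have h3 := h2 i (by simpa using hx)
    apply hh
    rw [← h3]
    simp [singleW, wl]
  · intro hx
    refine ⟨rfl, fun j hj => ?_⟩
    have : j ≠ i := by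
      rintro rfl
      simp [hx] at hj
    simp [singleW, wl, Pi.mulSingle_eq_of_ne this]

lemma suppSub_injective (G H : Type*) [Group G] [Group H] [Nontrivial H] :
    Function.Injective (suppSub G H) := by
  obtain ⟨h, hh⟩ := exists_ne (1 : H)
  intro x y hxy
  funext i
  have := singleW_mem i hh x
  rw [hxy, singleW_mem i hh y] at this
  cases hx : x i <;> cases hy : y i <;> simp_all

lemma measurable_suppSub (G H : Type*) [Group G] [Group H] [Countable G] [Countable H] :
    Measurable (suppSub G H) := by
  have := wreath_countable G H
  refine measurable_to_sub _ fun w => ?_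
  simp only [mem_suppSub]
  refine MeasurableSet.inter (MeasurableSet.const _) ?_
  have : {a : G → Bool | ∀ i, a i = false → wl w i = 1} =
    ⋂ i, {a : G → Bool | a i = false → wl w i = 1} := by
    ext; simp
  refine Eq.mpr (congrArg MeasurableSet this) ?_
  refine MeasurableSet.iInter fun i => ?_
  have hd : MeasurableSet {b : Bool | b = false → wl w i = 1} := MeasurableSet.of_discrete
  have he : Measurable (fun a : G → Bool => a i) := measurable_pi_apply i
  exact he hd

/-! ### Bernoulli measures -/

/-- The Bernoulli measure on `Bool` with `P(true) = sigmoid r`. -/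
noncomputable def bern (r : ℝ) : Measure Bool :=
  ENNReal.ofReal (Real.sigmoid r) • Measure.dirac true +
    ENNReal.ofReal (1 - Real.sigmoid r) • Measure.dirac false

lemma bern_true (r : ℝ) : bern r {true} = ENNReal.ofReal (Real.sigmoid r) := by
  simp [bern]

lemma bern_false (r : ℝ) : bern r {false} = ENNReal.ofReal (1 - Real.sigmoid r) := by
  simp [bern]

instance bern_prob (r : ℝ) : IsProbabilityMeasure (bern r) := by
  constructor
  simp only [bern, Measure.add_apply, Measure.smul_apply, measure_univ, smul_eq_mul, mul_one]
  rw [← ENNReal.ofReal_add (Real.sigmoid_nonneg r) (by linarith [Real.sigmoid_le_one r])]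
  simp

lemma bern_singleton_le (r : ℝ) :
    ∃ q : ENNReal, q < 1 ∧ ∀ b : Bool, bern r {b} ≤ q := by
  refine ⟨max (bern r {true}) (bern r {false}), ?_, ?_⟩
  · rw [bern_true, bern_false, max_lt_iff]
    constructor
    · exact ENNReal.ofReal_lt_one.2 (Real.sigmoid_lt_one r)
    · exact ENNReal.ofReal_lt_one.2 (by linarith [Real.sigmoid_pos r])
  · rintro (_ | _)
    · exact le_max_right _ _
    · exact le_max_left _ _

lemma bern_pi_singleton {G : Type*} [Infinite G] (r : ℝ) (x : G → Bool) :
    Measure.infinitePi (fun _ : G => bern r) {x} = 0 := by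
  obtain ⟨q, hq, hb⟩ := bern_singleton_le r
  have hle : ∀ n : ℕ, Measure.infinitePi (fun _ : G => bern r) {x} ≤ q ^ n := by
    intro n
    obtain ⟨F, hF⟩ := Infinite.exists_subset_card_eq G n
    calc Measure.infinitePi (fun _ : G => bern r) {x}
        ≤ Measure.infinitePi (fun _ : G => bern r) (Set.pi F fun i => {x i}) := by
          refine measure_mono ?_
          rintro _ rfl
          simp [Set.mem_pi]
      _ = ∏ i ∈ F, bern r {x i} := Measure.infinitePi_pi _ (fun i _ => measurableSet_singleton _)
      _ ≤ ∏ _i ∈ F, q := Finset.prod_le_prod' fun i _ => hb _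
      _ = q ^ n := by rw [Finset.prod_const, hF]
  have ht := ENNReal.tendsto_pow_atTop_nhds_zero_of_lt_one hq
  exact le_antisymm (ge_of_tendsto' ht hle) (zero_le)

/-- **Continuum many non-atomic weakly mixing IRSs on wreath products (Section 8.B (1)).**
For `G` infinite countable and `H` non-trivial countable, the wreath product
`H ≀ G = (⊕_G H) ⋊ G` admits continuum many pairwise distinct invariant random subgroups
which are all non-atomic and weakly mixing. -/
theorem wreath_continuum_many_IRS (G H : Type*) [Group G] [Group H]
    [Countable G] [Countable H] [Infinite G] [Nontrivial H] :
    ∃ ν : ℝ → Measure (Subgroup (Wreath G H)),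
      (∀ r : ℝ, IsIRS (ν r)) ∧
      (∀ r : ℝ, NonAtomicMeasure (ν r)) ∧
      (∀ r : ℝ, WeaklyMixingAct
        (fun (d : Wreath G H) (K : Subgroup (Wreath G H)) => conjSub d K) (ν r)) ∧
      Function.Injective ν := by
  have := wreath_countable G H
  have hφ := measurable_suppSub G H
  refine ⟨fun r => (Measure.infinitePi (fun _ : G => bern r)).map (suppSub G H),
    fun r => ⟨?_, fun d => ?_⟩, fun r K => ?_, fun r s hs hinv => ?_, fun r r' hrr => ?_⟩
  · exact Measure.isProbabilityMeasure_map hφ.aemeasurable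
  · rw [Measure.map_map (measurable_conjSub d) hφ]
    have h1 : conjSub d ∘ suppSub G H =
        suppSub G H ∘ (fun (x : G → Bool) i => x ((wr d)⁻¹ * i)) := by
      funext x
      exact conjSub_suppSub d x
    rw [h1, ← Measure.map_map hφ (by fun_prop)]
    congr 1
    exact Measure.map_infinitePi_infinitePi_of_inj (P := fun _ : G => bern r)
      (mul_right_injective (wr d)⁻¹)
  · rw [Measure.map_apply hφ (measurableSet_singleton_sub K)]
    by_cases hK : ∃ x, suppSub G H x = K
    · obtain ⟨x, rfl⟩ := hK
      have : suppSub G H ⁻¹' {suppSub G H x} = {x} := by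
        ext y
        simp [(suppSub_injective G H).eq_iff]
      rw [this]
      exact bern_pi_singleton r x
    · have : suppSub G H ⁻¹' {K} = ∅ := by
        ext y
        simp only [Set.mem_preimage, Set.mem_singleton_iff, Set.mem_empty_iff_false, iff_false]
        exact fun h => hK ⟨y, h⟩
      rw [this, measure_empty]
  · -- pull everything back to the Bernoulli shift indexed by `G ⊕ G`
    let Ψ : (G ⊕ G → Bool) → Subgroup (Wreath G H) × Subgroup (Wreath G H) := fun z =>
      (suppSub G H (fun i => z (Sum.inl i)), suppSub G H (fun i => z (Sum.inr i)))
    have hΨ : Measurable Ψ :=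
      (hφ.comp (by fun_prop)).prodMk (hφ.comp (by fun_prop))
    have hm : Measurable (fun p : (G → Bool) × (G → Bool) =>
        (Sum.elim p.1 p.2 : G ⊕ G → Bool)) := by
      refine measurable_pi_iff.2 fun i => ?_
      rcases i with i | i <;> simp only [Sum.elim_inl, Sum.elim_inr] <;> fun_prop
    have hmeas : ((Measure.infinitePi (fun _ : G => bern r)).map (suppSub G H)).prod
        ((Measure.infinitePi (fun _ : G => bern r)).map (suppSub G H)) =
        (Measure.infinitePi (fun _ : G ⊕ G => bern r)).map Ψ := by
      rw [Measure.map_prod_map _ _ hφ hφ, ← map_sumElim_prod, Measure.map_map hΨ hm]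
      rfl
    rw [hmeas, Measure.map_apply hΨ hs, Measure.map_apply hΨ hs.compl, Set.preimage_compl]
    refine bernoulli_ergodic (bern r)
      (fun g : G => Equiv.sumCongr (Equiv.mulLeft g) (Equiv.mulLeft g))
      exists_disj_translate _ (hΨ hs) fun g => ?_
    let d : Wreath G H := (⟨1, g⁻¹⟩ : SemidirectProduct _ _ _)
    have hd := hinv d
    conv_rhs => rw [← hd]
    ext z
    have hx : ∀ x : G → Bool, conjSub d (suppSub G H x) = suppSub G H (fun i => x (g * i)) := by
      intro x
      rw [conjSub_suppSub]
      change suppSub G H (fun i => x ((g⁻¹)⁻¹ * i)) = _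
      rw [inv_inv]
    simp only [Set.mem_preimage, Ψ, hx]
    rfl
  · obtain ⟨h, hh⟩ := exists_ne (1 : H)
    have hval : ∀ r, (Measure.infinitePi (fun _ : G => bern r)).map (suppSub G H)
        {K | singleW G H 1 h ∈ K} = ENNReal.ofReal (Real.sigmoid r) := by
      intro r
      rw [Measure.map_apply hφ (measurableSet_mem_sub _)]
      have : suppSub G H ⁻¹' {K | singleW G H 1 h ∈ K} =
          (fun x : G → Bool => x 1) ⁻¹' {true} := by
        ext x
        simp [singleW_mem 1 hh x]
      rw [this, ← Measure.map_apply (measurable_pi_apply 1) (measurableSet_singleton _),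
        ← bern_true]
      congr 1
      exact Measure.infinitePi_map_eval (fun _ : G => bern r) 1
    have h1 := hval r
    have h2 := hval r'
    have h3 : (Measure.infinitePi (fun _ : G => bern r)).map (suppSub G H) =
      (Measure.infinitePi (fun _ : G => bern r')).map (suppSub G H) := hrr
    rw [h3, h2] at h1
    exact (Real.sigmoid_injective ((ENNReal.ofReal_eq_ofReal_iff (Real.sigmoid_nonneg _)
      (Real.sigmoid_nonneg _)).1 h1)).symm


end IRSPaper
end
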